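/- arXiv:1002.4736 — 2 statements merged into one kernel-verified Lean document; each statement's English description precedes it below -/
import Mathlib

section
/- Let a, b be Schwartz functions on ℝ^d. If a ∈ Ḣ^{(d-1)/2}(ℝ^d) ∩ Ḣ^s(ℝ^d) and b ∈ L^∞(ℝ^d) ∩ Ḣ^{s+1/2}(ℝ^d) for some s > 0, then the product ab belongs to Ḣ^s(ℝ^d) and ‖ab‖_{Ḣ^s} ≤ C (‖a‖_{Ḣ^{(d-1)/2}} ‖b‖_{Ḣ^{s+1/2}} + ‖a‖_{Ḣ^s} ‖b‖_{L^∞}) for a constant C depending only on d and s. -/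
open MeasureTheory Real
open scoped FourierTransform ENNReal

noncomputable section

/-- `ℝ^d` as a Euclidean space. -/
abbrev E (d : ℕ) := EuclideanSpace ℝ (Fin d)

/-- Homogeneous Sobolev norm `‖f‖_{Ḣ^s(ℝ^d)} = (∫ |ξ|^{2s} |𝓕f(ξ)|² dξ)^{1/2}`. -/
noncomputable def hNorm (d : ℕ) (s : ℝ) (f : E d → ℂ) : ℝ :=
  (∫ ξ : E d, ‖ξ‖ ^ (2 * s) * ‖𝓕 f ξ‖ ^ 2) ^ (1/2 : ℝ)

open SchwartzMap in
lemma fourier_fourier_apply {d : ℕ} (f : SchwartzMap (E d) ℂ) (x : E d) :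
    𝓕 (𝓕 f) x = f (-x) := by
  have h : (𝓕⁻ (𝓕 f)) (-x) = f (-x) := by simp
  rw [← h, fourierInv_apply_eq]
  simp

/-- multiplication of Schwartz functions -/
abbrev mulS {d : ℕ} (f g : SchwartzMap (E d) ℂ) : SchwartzMap (E d) ℂ :=
  SchwartzMap.pairing (ContinuousLinearMap.mul ℂ ℂ) f g

lemma fourier_mul_schwartz {d : ℕ} (f g : SchwartzMap (E d) ℂ) (ξ : E d) :
    𝓕 (mulS f g) ξ = ∫ t, 𝓕 f t * 𝓕 g (ξ - t) := by
  have h : 𝓕 (mulS f g) =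
      SchwartzMap.convolution (ContinuousLinearMap.mul ℂ ℂ) (𝓕 f) (𝓕 g) := by
    have h2 : 𝓕 (𝓕 (mulS f g)) =
      𝓕 (SchwartzMap.convolution (ContinuousLinearMap.mul ℂ ℂ) (𝓕 f) (𝓕 g)) := by
      rw [SchwartzMap.fourier_convolution]
      ext x
      simp only [SchwartzMap.pairing_apply_apply, fourier_fourier_apply]
    have h3 := congrArg (fun u => 𝓕⁻ u) h2
    simpa using h3
  rw [h, SchwartzMap.convolution_apply]
  rfl

lemma lintegral_enorm_sq_schwartz {d : ℕ} (f : SchwartzMap (E d) ℂ) :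
    ∫⁻ x, ‖f x‖ₑ ^ 2 = ENNReal.ofReal (∫ x, ‖f x‖ ^ 2) := by
  rw [ofReal_integral_eq_lintegral_ofReal]
  · refine lintegral_congr fun x => ?_
    rw [← ofReal_norm, ENNReal.ofReal_pow (norm_nonneg _)]
  · have := (f.memLp 2 (μ := volume))
    exact this.integrable_norm_pow (by norm_num)
  · exact Filter.Eventually.of_forall fun x => by positivity

lemma plancherel_lintegral {d : ℕ} (f : SchwartzMap (E d) ℂ) :
    ∫⁻ x, ‖𝓕 f x‖ₑ ^ 2 = ∫⁻ x, ‖f x‖ₑ ^ 2 := by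
  rw [lintegral_enorm_sq_schwartz, lintegral_enorm_sq_schwartz, SchwartzMap.integral_norm_sq_fourier]

lemma conv_L2 {d : ℕ} (u v : SchwartzMap (E d) ℂ) (M : ℝ)
    (hM : ∀ x, ‖𝓕⁻ u x‖ ≤ M) :
    ∫⁻ ξ, ‖∫ t, u t * v (ξ - t)‖ₑ ^ 2 ≤ ENNReal.ofReal M ^ 2 * ∫⁻ ξ, ‖v ξ‖ₑ ^ 2 := by
  have h1 : ∀ ξ, ∫ t, u t * v (ξ - t) = 𝓕 (mulS (𝓕⁻ u) (𝓕⁻ v)) ξ := by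
    intro ξ
    rw [fourier_mul_schwartz]
    simp
  simp_rw [h1]
  rw [plancherel_lintegral]
  have h2 : ∫⁻ ξ, ‖v ξ‖ₑ ^ 2 = ∫⁻ ξ, ‖𝓕⁻ v ξ‖ₑ ^ 2 := by
    rw [← plancherel_lintegral (𝓕⁻ v)]; simp
  rw [h2, ← lintegral_const_mul']
  · refine lintegral_mono fun x => ?_
    rw [← mul_pow]
    gcongr
    simp only [SchwartzMap.pairing_apply_apply, ContinuousLinearMap.mul_apply', enorm_mul]
    gcongr
    rw [← ofReal_norm]
    exact ENNReal.ofReal_le_ofReal (hM x)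
  · simp

/-- bump function -/
def bump0 (d : ℕ) : ContDiffBump (0 : E d) := ⟨1, 2, by norm_num, by norm_num⟩

/-- rescaled bump as a Schwartz function -/
def chi (d : ℕ) (r : ℝ) (hr : 0 < r) : SchwartzMap (E d) ℂ :=
  HasCompactSupport.toSchwartzMap (f := fun x : E d => ((bump0 d (r • x) : ℝ) : ℂ))
    (by
      have h := ((bump0 d).hasCompactSupport).comp_smul hr.ne'
      exact h.comp_left (g := fun x : ℝ => (x : ℂ)) (by simp))
    (by
      exact (Complex.ofRealCLM.contDiff.comp (bump0 d).contDiff).comp (contDiff_const_smul r))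

lemma chi_apply (d : ℕ) (r : ℝ) (hr : 0 < r) (x : E d) :
    chi d r hr x = ((bump0 d (r • x) : ℝ) : ℂ) := rfl

lemma chi_one (d : ℕ) (r : ℝ) (hr : 0 < r) (x : E d) (h : r * ‖x‖ ≤ 1) : chi d r hr x = 1 := by
  rw [chi_apply, (bump0 d).one_of_mem_closedBall]
  · simp
  · simpa [bump0, norm_smul, abs_of_pos hr] using h

lemma chi_zero (d : ℕ) (r : ℝ) (hr : 0 < r) (x : E d) (h : 2 ≤ r * ‖x‖) : chi d r hr x = 0 := by
  rw [chi_apply, (bump0 d).zero_of_le_dist]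
  · simp
  · simpa [bump0, norm_smul, abs_of_pos hr] using h

lemma chi_norm_le (d : ℕ) (r : ℝ) (x : E d) :
    0 ≤ bump0 d (r • x) ∧ bump0 d (r • x) ≤ 1 := ⟨(bump0 d).nonneg, (bump0 d).le_one⟩

lemma fourierInv_chi (d : ℕ) (r : ℝ) (hr : 0 < r) (x : E d) :
    𝓕⁻ (chi d r hr) x = ((r ^ d)⁻¹ : ℝ) • 𝓕⁻ (chi d 1 one_pos) (r⁻¹ • x) := by
  rw [SchwartzMap.fourierInv_coe, SchwartzMap.fourierInv_coe, Real.fourierInv_eq,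
    Real.fourierInv_eq]
  have := Measure.integral_comp_smul (volume : Measure (E d))
    (fun v => Real.fourierChar (inner ℝ v (r⁻¹ • x)) • chi d 1 one_pos v) r
  rw [finrank_euclideanSpace_fin, abs_of_pos (by positivity)] at this
  rw [← this]
  refine integral_congr_ae (Filter.Eventually.of_forall fun v => ?_)
  simp only [chi_apply, inner_smul_left, inner_smul_right, one_smul]
  congr 2
  simp
  field_simp

lemma fourierInv_chi_L1 (d : ℕ) (r : ℝ) (hr : 0 < r) :
    ∫ x, ‖𝓕⁻ (chi d r hr) x‖ = ∫ x, ‖𝓕⁻ (chi d 1 one_pos) x‖ := by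
  simp_rw [fourierInv_chi d r hr, norm_smul]
  rw [integral_const_mul]
  rw [Measure.integral_comp_smul (volume : Measure (E d))
    (fun v => ‖𝓕⁻ (chi d 1 one_pos) v‖) r⁻¹]
  rw [finrank_euclideanSpace_fin, Real.norm_of_nonneg (by positivity), abs_of_pos (by positivity)]
  simp
  field_simp

lemma chi_Linf (d : ℕ) (r : ℝ) (hr : 0 < r) (b : SchwartzMap (E d) ℂ) (M : ℝ)
    (hM : ∀ x, ‖b x‖ ≤ M) (x : E d) :
    ‖𝓕⁻ (mulS (chi d r hr) (𝓕 b)) x‖ ≤ (∫ x, ‖𝓕⁻ (chi d 1 one_pos) x‖) * M := by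
  have h : 𝓕⁻ (mulS (chi d r hr) (𝓕 b)) =
      SchwartzMap.convolution (ContinuousLinearMap.mul ℂ ℂ) (𝓕⁻ (chi d r hr)) b := by
    have h2 := SchwartzMap.fourier_convolution (ContinuousLinearMap.mul ℂ ℂ) (𝓕⁻ (chi d r hr)) b
    have h3 := congrArg (fun u => 𝓕⁻ u) h2
    simpa using h3.symm
  rw [h, SchwartzMap.convolution_apply, ← fourierInv_chi_L1 d r hr, ← integral_mul_const]
  refine norm_integral_le_of_norm_le ?_ (Filter.Eventually.of_forall fun t => ?_)
  · exact ((𝓕⁻ (chi d r hr)).integrable.norm).mul_const M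
  · simp only [ContinuousLinearMap.mul_apply', norm_mul]
    gcongr
    exact hM _

lemma radial_int (s ρ : ℝ) (hs : 0 < s) (hρ : 0 < ρ) :
    ∫ y in Set.Ioi (0:ℝ), (y + ρ) ^ (-(2 * s + 1)) = ρ ^ (-(2 * s)) / (2 * s) := by
  have h1 : ∫ y in Set.Ioi (0:ℝ), (y + ρ) ^ (-(2 * s + 1))
      = ∫ y in Set.Ioi (ρ:ℝ), y ^ (-(2 * s + 1)) := by
    have := (measurePreserving_add_right (volume : Measure ℝ) ρ).setIntegral_preimage_emb
      (measurableEmbedding_addRight ρ) (fun y => y ^ (-(2 * s + 1))) (Set.Ioi ρ)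
    rw [← this]
    simp
  rw [h1, integral_Ioi_rpow_of_lt (by linarith) hρ]
  rw [show -(2 * s + 1) + 1 = -(2 * s) by ring, neg_div_neg_eq]

lemma kernel_bound (d : ℕ) (hd : 1 ≤ d) (s : ℝ) (hs : 0 < s) :
    ∃ K : ℝ, 0 ≤ K ∧ ∀ ξ : E d, ξ ≠ 0 →
      ∫⁻ η in {η : E d | ‖ξ‖ ≤ 8 * ‖η‖},
        ENNReal.ofReal (‖η‖ ^ (-(2 * s + 1)) * ‖ξ - η‖ ^ (-((d:ℝ) - 1)))
      ≤ ENNReal.ofReal (K * ‖ξ‖ ^ (-(2 * s))) := by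
  have : Nonempty (Fin d) := ⟨⟨0, hd⟩⟩
  set v := (volume : Measure (E d)).real (Metric.ball 0 1)
  have hv : 0 ≤ v := measureReal_nonneg
  refine ⟨(17:ℝ) ^ (2 * s + 1) * (d * v / (2 * s)), by positivity, fun ξ hξ => ?_⟩
  have hρ : 0 < ‖ξ‖ := norm_pos_iff.mpr hξ
  set ρ := ‖ξ‖
  set f : ℝ → ℝ := fun y =>
    (17:ℝ) ^ (2 * s + 1) * ((y + ρ) ^ (-(2 * s + 1)) * y ^ (-((d:ℝ) - 1))) with hf
  have hfeq : ∀ y ∈ Set.Ioi (0:ℝ), y ^ (d - 1) • f y =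
      (17:ℝ) ^ (2 * s + 1) * (y + ρ) ^ (-(2 * s + 1)) := by
    intro y hy
    have hy : 0 < y := hy
    have : (y:ℝ) ^ (d - 1) * y ^ (-((d:ℝ) - 1)) = 1 := by
      rw [← Real.rpow_natCast, ← Real.rpow_add hy, Nat.cast_sub hd]
      simp
    simp only [hf, smul_eq_mul]
    linear_combination (17:ℝ) ^ (2 * s + 1) * (y + ρ) ^ (-(2 * s + 1)) * this
  have hIntg : Integrable (fun ζ : E d => f ‖ζ‖) := by
    rw [integrable_fun_norm_addHaar, finrank_euclideanSpace_fin,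
      integrableOn_congr_fun hfeq measurableSet_Ioi]
    exact (integrableOn_add_rpow_Ioi_of_lt (by linarith) (by linarith)).const_mul _
  have hval : ∫ ζ : E d, f ‖ζ‖ = (17:ℝ) ^ (2 * s + 1) * (d * v / (2 * s)) * ρ ^ (-(2 * s)) := by
    rw [integral_fun_norm_addHaar, finrank_euclideanSpace_fin,
      setIntegral_congr_fun measurableSet_Ioi hfeq, integral_const_mul, radial_int s ρ hs hρ]
    simp only [nsmul_eq_mul, smul_eq_mul]
    change _ * (v * _) = _
    ring
  rw [← hval, ofReal_integral_eq_lintegral_ofReal hIntg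
    (Filter.Eventually.of_forall fun ζ => by simp only [hf, Pi.zero_apply]; positivity)]
  rw [← lintegral_sub_left_eq_self (fun ζ : E d => ENNReal.ofReal (f ‖ζ‖)) ξ]
  refine (setLIntegral_mono' ?_ fun η hη => ?_).trans (setLIntegral_le_lintegral _ _)
  · exact measurableSet_le (by fun_prop) (by fun_prop)
  · apply ENNReal.ofReal_le_ofReal
    simp only [hf]
    rw [← mul_assoc]
    refine mul_le_mul_of_nonneg_right ?_ (by positivity)
    have hη : ρ ≤ 8 * ‖η‖ := hη
    have hη0 : 0 < ‖η‖ := by linarith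
    have h1 : ‖ξ - η‖ ≤ ρ + ‖η‖ := norm_sub_le _ _
    have h2 : 0 < ‖ξ - η‖ + ρ := by positivity
    have h3 : (‖ξ - η‖ + ρ) ^ (2 * s + 1) ≤ (17 * ‖η‖) ^ (2 * s + 1) :=
      Real.rpow_le_rpow h2.le (by linarith) (by linarith)
    rw [Real.mul_rpow (by norm_num) hη0.le] at h3
    rw [Real.rpow_neg hη0.le, Real.rpow_neg h2.le, ← div_eq_mul_inv,
      inv_eq_one_div, div_le_div_iff₀ (by positivity) (by positivity)]
    linarith

lemma CS_enn {X : Type*} [MeasurableSpace X] (μ : Measure X) {f g : X → ℝ≥0∞}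
    (hf : AEMeasurable f μ) (hg : AEMeasurable g μ) :
    (∫⁻ x, f x * g x ∂μ) ^ 2 ≤ (∫⁻ x, f x ^ 2 ∂μ) * ∫⁻ x, g x ^ 2 ∂μ := by
  have h := ENNReal.lintegral_mul_le_Lp_mul_Lq μ Real.HolderConjugate.two_two hf hg
  have h2 := pow_le_pow_left₀ (zero_le) h 2
  rw [mul_pow, ← ENNReal.rpow_natCast, ← ENNReal.rpow_natCast, ← ENNReal.rpow_natCast,
    ← ENNReal.rpow_mul, ← ENNReal.rpow_mul] at h2
  simpa using h2

/-- weighted square integral -/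
def wInt (d : ℕ) (s : ℝ) (α : E d → ℂ) : ℝ≥0∞ :=
  ∫⁻ ξ : E d, ENNReal.ofReal (‖ξ‖ ^ (2 * s)) * ‖α ξ‖ₑ ^ 2

/-- remainder -/
def rem (d : ℕ) (α β : E d → ℂ) (ξ : E d) : ℝ≥0∞ :=
  ∫⁻ η in {η : E d | ‖ξ‖ ≤ 8 * ‖η‖}, ‖β η‖ₑ * ‖α (ξ - η)‖ₑ

lemma ae_ne (d : ℕ) (hd : 1 ≤ d) (z : E d) : ∀ᵐ x : E d, x ≠ z := by
  have : Nonempty (Fin d) := ⟨⟨0, hd⟩⟩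
  rw [ae_iff]; simp

lemma rem_bound (d : ℕ) (hd : 1 ≤ d) (s : ℝ) (hs : 0 < s) :
    ∃ K : ℝ, 0 ≤ K ∧ ∀ α β : E d → ℂ, Continuous α → Continuous β →
      ∫⁻ ξ : E d, ENNReal.ofReal (‖ξ‖ ^ (2 * s)) * rem d α β ξ ^ 2
      ≤ ENNReal.ofReal K * (wInt d (((d:ℝ) - 1)/2) α * wInt d (s + 1/2) β) := by
  obtain ⟨K, hK, hker⟩ := kernel_bound d hd s hs
  refine ⟨K, hK, fun α β hα hβ => ?_⟩
  set A : E d → ℝ≥0∞ := fun ζ => ENNReal.ofReal (‖ζ‖ ^ (((d:ℝ) - 1)/2)) * ‖α ζ‖ₑ with hA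
  set B : E d → ℝ≥0∞ := fun ζ => ENNReal.ofReal (‖ζ‖ ^ (s + 1/2)) * ‖β ζ‖ₑ with hB
  have hAm : Measurable A := by
    have := hα.measurable
    simp only [hA]; fun_prop
  have hBm : Measurable B := by
    have := hβ.measurable
    simp only [hB]; fun_prop
  have hsq : ∀ (t : ℝ) (γ : E d → ℂ) (ζ : E d),
      (ENNReal.ofReal (‖ζ‖ ^ t) * ‖γ ζ‖ₑ) ^ 2 = ENNReal.ofReal (‖ζ‖ ^ (2 * t)) * ‖γ ζ‖ₑ ^ 2 := by
    intro t γ ζ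
    rw [mul_pow, ← ENNReal.ofReal_pow (by positivity), ← Real.rpow_natCast,
      ← Real.rpow_mul (norm_nonneg _)]
    congr 3
    push_cast; ring
  have hA2 : ∫⁻ ζ, A ζ ^ 2 = wInt d (((d:ℝ) - 1)/2) α := by
    simp only [hA, hsq, wInt]
  have hB2 : ∫⁻ ζ, B ζ ^ 2 = wInt d (s + 1/2) β := by
    simp only [hB, hsq, wInt]
  have key : ∀ ξ : E d, ξ ≠ 0 → ENNReal.ofReal (‖ξ‖ ^ (2 * s)) * rem d α β ξ ^ 2
      ≤ ENNReal.ofReal K * ∫⁻ η, B η ^ 2 * A (ξ - η) ^ 2 := by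
    intro ξ hξ
    have hρ : 0 < ‖ξ‖ := norm_pos_iff.mpr hξ
    set g : E d → ℝ≥0∞ := fun η =>
      ENNReal.ofReal (‖η‖ ^ (-(s + 1/2)) * ‖ξ - η‖ ^ (-(((d:ℝ) - 1)/2))) with hg
    have hgm : Measurable g := by simp only [hg]; fun_prop
    have h1 : rem d α β ξ =
        ∫⁻ η in {η : E d | ‖ξ‖ ≤ 8 * ‖η‖}, (B η * A (ξ - η)) * g η := by
      refine lintegral_congr_ae ?_
      filter_upwards [ae_restrict_of_ae (ae_ne d hd 0), ae_restrict_of_ae (ae_ne d hd ξ)]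
        with η h0 h1
      have h0 : 0 < ‖η‖ := norm_pos_iff.mpr h0
      have h1 : 0 < ‖ξ - η‖ := norm_pos_iff.mpr (sub_ne_zero.mpr h1.symm)
      have h2 : ENNReal.ofReal (‖η‖ ^ (s + 1/2)) * ENNReal.ofReal (‖ξ - η‖ ^ (((d:ℝ) - 1)/2))
          * g η = 1 := by
        simp only [hg]
        rw [← ENNReal.ofReal_mul (by positivity), ← ENNReal.ofReal_mul (by positivity),
          ← ENNReal.ofReal_one]
        congr 1
        rw [Real.rpow_neg h0.le, Real.rpow_neg h1.le]
        field_simp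
      simp only [hA, hB]
      calc _ = 1 * (‖β η‖ₑ * ‖α (ξ - η)‖ₑ) := by rw [one_mul]
        _ = _ := by rw [← h2]; ring
    have h2 := CS_enn (volume.restrict {η : E d | ‖ξ‖ ≤ 8 * ‖η‖})
      (f := fun η => B η * A (ξ - η)) (g := g) (by fun_prop) (by fun_prop)
    rw [← h1] at h2
    have h3 : ∫⁻ η in {η : E d | ‖ξ‖ ≤ 8 * ‖η‖}, g η ^ 2
        ≤ ENNReal.ofReal (K * ‖ξ‖ ^ (-(2 * s))) := by
      refine le_trans (le_of_eq ?_) (hker ξ hξ)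
      refine lintegral_congr fun η => ?_
      simp only [hg]
      rw [← ENNReal.ofReal_pow (by positivity), mul_pow, ← Real.rpow_natCast, ← Real.rpow_natCast,
        ← Real.rpow_mul (norm_nonneg _), ← Real.rpow_mul (norm_nonneg _)]
      congr 3 <;> push_cast <;> ring
    calc _ ≤ ENNReal.ofReal (‖ξ‖ ^ (2 * s)) * ((∫⁻ η, (B η * A (ξ - η)) ^ 2) *
          ENNReal.ofReal (K * ‖ξ‖ ^ (-(2 * s)))) := by
          gcongr
          refine h2.trans ?_
          gcongr
          exact Measure.restrict_le_self
      _ = (ENNReal.ofReal (‖ξ‖ ^ (2 * s)) * ENNReal.ofReal (K * ‖ξ‖ ^ (-(2 * s)))) *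
            ∫⁻ η, (B η * A (ξ - η)) ^ 2 := by ring
      _ = _ := by
          rw [← ENNReal.ofReal_mul (by positivity)]
          congr 2
          · rw [Real.rpow_neg hρ.le]; field_simp
          · ext η; rw [mul_pow]
  calc _ ≤ ∫⁻ ξ, ENNReal.ofReal K * ∫⁻ η, B η ^ 2 * A (ξ - η) ^ 2 := by
        refine lintegral_mono_ae ?_
        filter_upwards [ae_ne d hd 0] with ξ hξ using key ξ hξ
    _ = ENNReal.ofReal K * ∫⁻ ξ, ∫⁻ η, B η ^ 2 * A (ξ - η) ^ 2 :=
        lintegral_const_mul' _ _ (by simp)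
    _ = _ := by
        congr 1
        rw [lintegral_lintegral_swap (by fun_prop)]
        have : ∀ η, ∫⁻ ξ, B η ^ 2 * A (ξ - η) ^ 2 = B η ^ 2 * ∫⁻ ξ, A ξ ^ 2 := by
          intro η
          rw [lintegral_const_mul _ (by fun_prop), lintegral_sub_right_eq_self (fun ξ => A ξ ^ 2)]
        simp_rw [this]
        rw [lintegral_mul_const _ (by fun_prop), hA2, hB2, mul_comm]

lemma T_bound (d : ℕ) (s : ℝ) (hs : 0 < s) (R : ℝ) (hR : 0 < R) (α b : SchwartzMap (E d) ℂ)
    (M : ℝ) (hM : ∀ x, ‖b x‖ ≤ M) :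
    ∫⁻ ξ in {ξ : E d | R ≤ ‖ξ‖ ∧ ‖ξ‖ < 2 * R}, ENNReal.ofReal (‖ξ‖ ^ (2 * s)) *
      ‖∫ t, (mulS (chi d (4 / R) (by positivity)) (𝓕 b)) t * α (ξ - t)‖ₑ ^ 2
    ≤ ENNReal.ofReal ((∫ x, ‖𝓕⁻ (chi d 1 one_pos) x‖) * M) ^ 2 * (ENNReal.ofReal (8 ^ (2 * s)) *
      ∫⁻ ζ in {ζ : E d | R / 4 ≤ ‖ζ‖ ∧ ‖ζ‖ < 16 * R},
        ENNReal.ofReal (‖ζ‖ ^ (2 * s)) * ‖α ζ‖ₑ ^ 2) := by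
  set u := mulS (chi d (4 / R) (by positivity)) (𝓕 b) with hu
  set v := mulS (chi d (1 / (4 * R)) (by positivity) - chi d (4 / R) (by positivity)) α with hv
  have hms : MeasurableSet {ξ : E d | R ≤ ‖ξ‖ ∧ ‖ξ‖ < 2 * R} :=
    (measurableSet_le measurable_const measurable_norm).inter
      (measurableSet_lt measurable_norm measurable_const)
  have hma : MeasurableSet {ζ : E d | R / 4 ≤ ‖ζ‖ ∧ ‖ζ‖ < 16 * R} :=
    (measurableSet_le measurable_const measurable_norm).inter
      (measurableSet_lt measurable_norm measurable_const)
  have h1 : ∀ ξ ∈ {ξ : E d | R ≤ ‖ξ‖ ∧ ‖ξ‖ < 2 * R}, ∀ t, u t * α (ξ - t) = u t * v (ξ - t) := by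
    rintro ξ ⟨hξ1, hξ2⟩ t
    by_cases ht : R / 2 ≤ ‖t‖
    · have : u t = 0 := by
        simp only [hu, SchwartzMap.pairing_apply_apply, ContinuousLinearMap.mul_apply']
        rw [chi_zero, zero_mul]
        rw [div_mul_eq_mul_div, le_div_iff₀ hR]; linarith
      rw [this]; simp
    · push Not at ht
      have ha : ‖ξ - t‖ ≤ ‖ξ‖ + ‖t‖ := norm_sub_le _ _
      have hb : ‖ξ‖ - ‖t‖ ≤ ‖ξ - t‖ := norm_sub_norm_le _ _
      congr 1
      simp only [hv, SchwartzMap.pairing_apply_apply, ContinuousLinearMap.mul_apply',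
        sub_apply]
      rw [chi_zero d (4 / R), chi_one]
      · simp
      · rw [one_div, inv_mul_le_iff₀ (by positivity)]; linarith
      · rw [div_mul_eq_mul_div, le_div_iff₀ hR]; linarith
  have h2 : ∀ ζ, ENNReal.ofReal ((2 * R) ^ (2 * s)) * ‖v ζ‖ₑ ^ 2 ≤
      Set.indicator {ζ : E d | R / 4 ≤ ‖ζ‖ ∧ ‖ζ‖ < 16 * R} (fun ζ => ENNReal.ofReal (8 ^ (2 * s)) *
        (ENNReal.ofReal (‖ζ‖ ^ (2 * s)) * ‖α ζ‖ₑ ^ 2)) ζ := by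
    intro ζ
    have hvz : v ζ = (chi d (1 / (4 * R)) (by positivity) ζ - chi d (4 / R) (by positivity) ζ) * α ζ := by
      simp only [hv, SchwartzMap.pairing_apply_apply, ContinuousLinearMap.mul_apply',
        sub_apply]
    by_cases hz : ζ ∈ {ζ : E d | R / 4 ≤ ‖ζ‖ ∧ ‖ζ‖ < 16 * R}
    · rw [Set.indicator_of_mem hz, ← mul_assoc, ← ENNReal.ofReal_mul (by positivity)]
      gcongr ?_ * ?_ ^ 2
      · apply ENNReal.ofReal_le_ofReal
        rw [← Real.mul_rpow (by norm_num) (norm_nonneg _)]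
        apply Real.rpow_le_rpow (by positivity) _ (by positivity)
        linarith [hz.1]
      · rw [hvz, enorm_mul]
        refine mul_le_of_le_one_left zero_le ?_
        rw [← ofReal_norm, ← ENNReal.ofReal_one]
        apply ENNReal.ofReal_le_ofReal
        rw [chi_apply, chi_apply, ← Complex.ofReal_sub, Complex.norm_real, Real.norm_eq_abs,
          abs_le]
        have ha := chi_norm_le d (1 / (4 * R)) ζ
        have hb := chi_norm_le d (4 / R) ζ
        constructor <;> linarith [ha.1, ha.2, hb.1, hb.2]
    · have : v ζ = 0 := by
        rw [hvz]
        by_cases hc : R / 4 ≤ ‖ζ‖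
        · have hc' : 16 * R ≤ ‖ζ‖ := by
            by_contra hcc
            exact hz ⟨hc, not_le.mp hcc⟩
          rw [chi_zero, chi_zero]
          · simp
          · rw [div_mul_eq_mul_div, le_div_iff₀ hR]; linarith
          · rw [div_mul_eq_mul_div, le_div_iff₀ (by positivity)]; linarith
        · push Not at hc
          rw [chi_one, chi_one]
          · simp
          · rw [div_mul_eq_mul_div, div_le_iff₀ hR]; linarith
          · rw [div_mul_eq_mul_div, div_le_iff₀ (by positivity)]; linarith
      rw [this]; simp
  have h3 := conv_L2 u v _ (chi_Linf d (4 / R) (by positivity) b M hM)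
  calc _ ≤ ∫⁻ ξ in {ξ : E d | R ≤ ‖ξ‖ ∧ ‖ξ‖ < 2 * R}, ENNReal.ofReal ((2 * R) ^ (2 * s)) *
      ‖∫ t, u t * v (ξ - t)‖ₑ ^ 2 := by
        refine setLIntegral_mono' hms fun ξ hξ => ?_
        simp_rw [h1 ξ hξ]
        gcongr
        exact hξ.2.le
    _ ≤ ∫⁻ ξ, ENNReal.ofReal ((2 * R) ^ (2 * s)) * ‖∫ t, u t * v (ξ - t)‖ₑ ^ 2 :=
        setLIntegral_le_lintegral _ _
    _ = ENNReal.ofReal ((2 * R) ^ (2 * s)) * ∫⁻ ξ, ‖∫ t, u t * v (ξ - t)‖ₑ ^ 2 :=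
        lintegral_const_mul' _ _ (by simp)
    _ ≤ ENNReal.ofReal ((2 * R) ^ (2 * s)) *
          (ENNReal.ofReal ((∫ x, ‖𝓕⁻ (chi d 1 one_pos) x‖) * M) ^ 2 * ∫⁻ ξ, ‖v ξ‖ₑ ^ 2) := by
        gcongr
    _ = ENNReal.ofReal ((∫ x, ‖𝓕⁻ (chi d 1 one_pos) x‖) * M) ^ 2 *
          ∫⁻ ξ, ENNReal.ofReal ((2 * R) ^ (2 * s)) * ‖v ξ‖ₑ ^ 2 := by
        rw [lintegral_const_mul' _ _ (by simp)]; ring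
    _ ≤ _ := by
        gcongr
        rw [← lintegral_const_mul' _ _ (by simp), ← lintegral_indicator hma]
        exact lintegral_mono h2

/-- dyadic shell -/
def shell (d : ℕ) (j : ℤ) : Set (E d) := {ξ : E d | (2:ℝ) ^ j ≤ ‖ξ‖ ∧ ‖ξ‖ < 2 ^ (j + 1)}

lemma shell_meas (d : ℕ) (j : ℤ) : MeasurableSet (shell d j) :=
  (measurableSet_le measurable_const measurable_norm).inter
      (measurableSet_lt measurable_norm measurable_const)

lemma shell_disj (d : ℕ) : Pairwise (Function.onFun Disjoint (shell d)) := by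
  have key : ∀ i j : ℤ, i < j → Disjoint (shell d i) (shell d j) := by
    intro i j h
    rw [Set.disjoint_left]
    rintro x ⟨_, h1⟩ ⟨h2, _⟩
    have : (2:ℝ) ^ (i + 1) ≤ 2 ^ j := zpow_le_zpow_right₀ (by norm_num) (by omega)
    linarith
  intro i j h
  rcases lt_or_gt_of_ne h with h | h
  · exact key i j h
  · exact (key j i h).symm

lemma shell_sum_le (d : ℕ) (G : E d → ℝ≥0∞) (k : ℤ) :
    ∑' j : ℤ, ∫⁻ ξ in shell d (j + k), G ξ ≤ ∫⁻ ξ, G ξ := by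
  have h := (Equiv.addRight k).tsum_eq (fun j => ∫⁻ ξ in shell d j, G ξ)
  simp only [Equiv.coe_addRight] at h
  rw [h, ← lintegral_iUnion (shell_meas d) (shell_disj d)]
  exact setLIntegral_le_lintegral _ _

lemma shell_sum (d : ℕ) (hd : 1 ≤ d) (G : E d → ℝ≥0∞) :
    ∑' j : ℤ, ∫⁻ ξ in shell d j, G ξ = ∫⁻ ξ, G ξ := by
  rw [← lintegral_iUnion (shell_meas d) (shell_disj d)]
  conv_rhs => rw [← setLIntegral_univ G]
  refine setLIntegral_congr ?_
  filter_upwards [ae_ne d hd 0] with ξ hξ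
  obtain ⟨n, h1, h2⟩ := exists_mem_Ico_zpow (norm_pos_iff.mpr hξ) (one_lt_two (α := ℝ))
  apply propext
  exact ⟨fun _ => trivial, fun _ => Set.mem_iUnion.mpr ⟨n, h1, h2⟩⟩

lemma annulus_sub (d : ℕ) (j : ℤ) :
    {ζ : E d | (2:ℝ) ^ j / 4 ≤ ‖ζ‖ ∧ ‖ζ‖ < 16 * 2 ^ j} ⊆
      ⋃ k ∈ Finset.Icc (-2 : ℤ) 3, shell d (j + k) := by
  rintro ζ ⟨h1, h2⟩
  have hp : (0:ℝ) < 2 ^ j := by positivity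
  obtain ⟨n, h3, h4⟩ := exists_mem_Ico_zpow (show 0 < ‖ζ‖ by linarith) (one_lt_two (α := ℝ))
  have e1 : (2:ℝ) ^ j / 4 = 2 ^ (j - 2) := by
    rw [zpow_sub₀ (by norm_num)]; norm_num
  have e2 : 16 * (2:ℝ) ^ j = 2 ^ (j + 4) := by
    rw [zpow_add₀ (by norm_num)]; norm_num; ring
  rw [e1] at h1
  rw [e2] at h2
  have a1 : j - 2 < n + 1 := (zpow_lt_zpow_iff_right₀ (one_lt_two (α := ℝ))).mp (h1.trans_lt h4)
  have a2 : n < j + 4 := (zpow_lt_zpow_iff_right₀ (one_lt_two (α := ℝ))).mp (h3.trans_lt h2)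
  simp only [Set.mem_iUnion]
  refine ⟨n - j, Finset.mem_Icc.mpr ⟨by omega, by omega⟩, ?_⟩
  rw [show j + (n - j) = n by ring]
  exact ⟨h3, h4⟩

lemma lint_biUnion_le {d : ℕ} (S : Finset ℤ) (f : ℤ → Set (E d)) (G : E d → ℝ≥0∞) :
    ∫⁻ ζ in ⋃ k ∈ S, f k, G ζ ≤ ∑ k ∈ S, ∫⁻ ζ in f k, G ζ := by
  classical
  induction S using Finset.induction_on with
  | empty => simp
  | insert a S ha ih =>
    rw [Finset.sum_insert ha, Finset.set_biUnion_insert]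
    exact (lintegral_union_le _ _ _).trans (by gcongr)

lemma annulus_sum (d : ℕ) (G : E d → ℝ≥0∞) :
    ∑' j : ℤ, ∫⁻ ζ in {ζ : E d | (2:ℝ) ^ j / 4 ≤ ‖ζ‖ ∧ ‖ζ‖ < 16 * 2 ^ j}, G ζ
      ≤ 6 * ∫⁻ ζ, G ζ := by
  calc _ ≤ ∑' j : ℤ, ∑ k ∈ Finset.Icc (-2 : ℤ) 3, ∫⁻ ζ in shell d (j + k), G ζ := by
        refine ENNReal.tsum_le_tsum fun j => ?_
        exact (lintegral_mono_set (annulus_sub d j)).trans (lint_biUnion_le _ _ _)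
    _ = ∑ k ∈ Finset.Icc (-2 : ℤ) 3, ∑' j : ℤ, ∫⁻ ζ in shell d (j + k), G ζ :=
        Summable.tsum_finsetSum fun _ _ => ENNReal.summable
    _ ≤ ∑ k ∈ Finset.Icc (-2 : ℤ) 3, ∫⁻ ζ, G ζ :=
        Finset.sum_le_sum fun k _ => shell_sum_le d G k
    _ = _ := by simp

lemma decomp (d : ℕ) (R : ℝ) (hR : 0 < R) (α β : SchwartzMap (E d) ℂ) (ξ : E d)
    (hξ : ‖ξ‖ < 2 * R) :
    ‖∫ t, β t * α (ξ - t)‖ₑ ≤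
      ‖∫ t, (mulS (chi d (4 / R) (by positivity)) β) t * α (ξ - t)‖ₑ + rem d α β ξ := by
  set u := mulS (chi d (4 / R) (by positivity)) β with hu
  have hIntg : ∀ γ : SchwartzMap (E d) ℂ, Integrable (fun t => γ t * α (ξ - t)) := by
    intro γ
    refine γ.integrable.mul_bdd (c := SchwartzMap.seminorm ℝ 0 0 α) ?_ ?_
    · exact (α.continuous.comp (by fun_prop)).aestronglyMeasurable
    · exact Filter.Eventually.of_forall fun t => SchwartzMap.norm_le_seminorm ℝ α _
  have h1 : ∫ t, β t * α (ξ - t) = (∫ t, u t * α (ξ - t)) + ∫ t, (β - u) t * α (ξ - t) := by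
    rw [← integral_add (hIntg u) (hIntg (β - u))]
    refine integral_congr_ae (Filter.Eventually.of_forall fun t => ?_)
    simp only [sub_apply]; ring
  rw [h1]
  refine (enorm_add_le _ _).trans ?_
  gcongr
  refine (enorm_integral_le_lintegral_enorm _).trans ?_
  rw [rem, ← lintegral_indicator (measurableSet_le (by fun_prop) (by fun_prop))]
  refine lintegral_mono fun t => ?_
  have hut : (β - u) t = (1 - chi d (4 / R) (by positivity) t) * β t := by
    simp only [hu, sub_apply, SchwartzMap.pairing_apply_apply, ContinuousLinearMap.mul_apply']
    ring
  by_cases ht : t ∈ {η : E d | ‖ξ‖ ≤ 8 * ‖η‖}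
  · rw [Set.indicator_of_mem ht, enorm_mul]
    gcongr
    rw [hut, enorm_mul]
    refine mul_le_of_le_one_left zero_le ?_
    rw [← ofReal_norm, ← ENNReal.ofReal_one]
    apply ENNReal.ofReal_le_ofReal
    rw [chi_apply, ← Complex.ofReal_one, ← Complex.ofReal_sub, Complex.norm_real,
      Real.norm_eq_abs, abs_le]
    have hb := chi_norm_le d (4 / R) t
    constructor <;> linarith [hb.1, hb.2]
  · have ht' : 8 * ‖t‖ < ‖ξ‖ := not_le.mp ht
    have h0 : (β - u) t = 0 := by
      rw [hut, chi_one]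
      · simp
      · rw [div_mul_eq_mul_div, div_le_iff₀ hR]; linarith
    rw [h0]; simp

lemma main_enn (d : ℕ) (hd : 1 ≤ d) (s : ℝ) (hs : 0 < s) :
    ∃ K : ℝ, 0 ≤ K ∧ ∀ (a b : SchwartzMap (E d) ℂ) (M : ℝ), (∀ x, ‖b x‖ ≤ M) →
      wInt d s (⇑(𝓕 (mulS b a) : SchwartzMap (E d) ℂ)) ≤
        ENNReal.ofReal K * (ENNReal.ofReal M ^ 2 * wInt d s (⇑(𝓕 a : SchwartzMap (E d) ℂ))) +
        ENNReal.ofReal K * (wInt d (((d:ℝ) - 1)/2) (⇑(𝓕 a : SchwartzMap (E d) ℂ)) * wInt d (s + 1/2) (⇑(𝓕 b : SchwartzMap (E d) ℂ))) := by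
  obtain ⟨K, hK, hrem⟩ := rem_bound d hd s hs
  set K0 := ∫ x, ‖𝓕⁻ (chi d 1 one_pos) x‖ with hK0
  have hK0n : 0 ≤ K0 := integral_nonneg fun x => norm_nonneg _
  refine ⟨12 * K0 ^ 2 * 8 ^ (2 * s) + 2 * K, by positivity, fun a b M hM => ?_⟩
  set T : ℤ → E d → ℝ≥0∞ := fun j ξ => ‖∫ t, (mulS (chi d (4 / (2:ℝ) ^ j) (by positivity)) (𝓕 b)) t
    * 𝓕 a (ξ - t)‖ₑ ^ 2 with hT
  set w : E d → ℝ≥0∞ := fun ξ => ENNReal.ofReal (‖ξ‖ ^ (2 * s)) with hw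
  have hwm : Measurable w := by simp only [hw]; fun_prop
  have h1 : ∀ j, ∫⁻ ξ in shell d j, w ξ * ‖𝓕 (mulS b a) ξ‖ₑ ^ 2 ≤
      2 * (∫⁻ ξ in shell d j, w ξ * T j ξ)
        + 2 * ∫⁻ ξ in shell d j, w ξ * rem d (⇑(𝓕 a : SchwartzMap (E d) ℂ)) (⇑(𝓕 b : SchwartzMap (E d) ℂ)) ξ ^ 2 := by
    intro j
    have hTm : Measurable (T j) := by
      have : ∀ ξ, T j ξ = ‖𝓕 (mulS (𝓕⁻ (mulS (chi d (4 / (2:ℝ) ^ j) (by positivity)) (𝓕 b))) a) ξ‖ₑ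
          ^ 2 := by
        intro ξ
        simp only [hT]
        rw [fourier_mul_schwartz]
        simp
      have h2 : T j = _ := funext this
      rw [h2]
      exact (SchwartzMap.continuous _).measurable.enorm.pow_const 2
    rw [← lintegral_const_mul' _ _ (by simp), ← lintegral_const_mul' _ _ (by simp),
      ← lintegral_add_left (by fun_prop)]
    refine setLIntegral_mono' (shell_meas d j) fun ξ hξ => ?_
    have h3 := decomp d ((2:ℝ) ^ j) (by positivity) (𝓕 a) (𝓕 b) ξ (by
      have := hξ.2; rw [zpow_add_one₀ (by norm_num)] at this; linarith)
    rw [← fourier_mul_schwartz] at h3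
    calc _ ≤ w ξ * (2 * (T j ξ + rem d (⇑(𝓕 a : SchwartzMap (E d) ℂ)) (⇑(𝓕 b : SchwartzMap (E d) ℂ)) ξ ^ 2)) := by
          gcongr
          refine (pow_le_pow_left₀ zero_le h3 2).trans ?_
          have := ENNReal.rpow_add_le_mul_rpow_add_rpow
            (‖∫ t, (mulS (chi d (4 / (2:ℝ) ^ j) (by positivity)) (𝓕 b)) t * 𝓕 a (ξ - t)‖ₑ)
            (rem d (⇑(𝓕 a : SchwartzMap (E d) ℂ)) (⇑(𝓕 b : SchwartzMap (E d) ℂ)) ξ) (p := 2) (by norm_num)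
          norm_num at this
          exact this
      _ = _ := by ring
  have h2 : ∀ j, ∫⁻ ξ in shell d j, w ξ * T j ξ ≤ ENNReal.ofReal (K0 * M) ^ 2 *
      (ENNReal.ofReal (8 ^ (2 * s)) *
        ∫⁻ ζ in {ζ : E d | (2:ℝ) ^ j / 4 ≤ ‖ζ‖ ∧ ‖ζ‖ < 16 * 2 ^ j}, w ζ * ‖𝓕 a ζ‖ₑ ^ 2) := by
    intro j
    have := T_bound d s hs ((2:ℝ) ^ j) (by positivity) (𝓕 a) b M hM
    have hsh : shell d j = {ξ : E d | (2:ℝ) ^ j ≤ ‖ξ‖ ∧ ‖ξ‖ < 2 * 2 ^ j} := by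
      rw [shell, zpow_add_one₀ (by norm_num), mul_comm]
    rw [hsh]
    exact this
  calc wInt d s (⇑(𝓕 (mulS b a) : SchwartzMap (E d) ℂ)) = ∑' j, ∫⁻ ξ in shell d j, w ξ * ‖𝓕 (mulS b a) ξ‖ₑ ^ 2 := by
        rw [shell_sum d hd]; rfl
    _ ≤ ∑' j, (2 * (ENNReal.ofReal (K0 * M) ^ 2 * (ENNReal.ofReal (8 ^ (2 * s)) *
          ∫⁻ ζ in {ζ : E d | (2:ℝ) ^ j / 4 ≤ ‖ζ‖ ∧ ‖ζ‖ < 16 * 2 ^ j}, w ζ * ‖𝓕 a ζ‖ₑ ^ 2))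
        + 2 * ∫⁻ ξ in shell d j, w ξ * rem d (⇑(𝓕 a : SchwartzMap (E d) ℂ)) (⇑(𝓕 b : SchwartzMap (E d) ℂ)) ξ ^ 2) := by
        refine ENNReal.tsum_le_tsum fun j => (h1 j).trans ?_
        gcongr
        exact h2 j
    _ ≤ 2 * (ENNReal.ofReal (K0 * M) ^ 2 * (ENNReal.ofReal (8 ^ (2 * s)) *
          (6 * wInt d s (⇑(𝓕 a : SchwartzMap (E d) ℂ))))) + 2 * ∫⁻ ξ, w ξ * rem d (⇑(𝓕 a : SchwartzMap (E d) ℂ)) (⇑(𝓕 b : SchwartzMap (E d) ℂ)) ξ ^ 2 := by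
        rw [ENNReal.tsum_add, ENNReal.tsum_mul_left, ENNReal.tsum_mul_left, ENNReal.tsum_mul_left,
          ENNReal.tsum_mul_left, shell_sum d hd]
        gcongr
        exact annulus_sum d _
    _ ≤ 2 * (ENNReal.ofReal (K0 * M) ^ 2 * (ENNReal.ofReal (8 ^ (2 * s)) *
          (6 * wInt d s (⇑(𝓕 a : SchwartzMap (E d) ℂ))))) + 2 * (ENNReal.ofReal K *
            (wInt d (((d:ℝ) - 1)/2) (⇑(𝓕 a : SchwartzMap (E d) ℂ)) * wInt d (s + 1/2) (⇑(𝓕 b : SchwartzMap (E d) ℂ)))) := by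
        gcongr
        exact hrem _ _ (SchwartzMap.continuous _) (SchwartzMap.continuous _)
    _ = ENNReal.ofReal (12 * K0 ^ 2 * 8 ^ (2 * s)) * (ENNReal.ofReal M ^ 2 * wInt d s (⇑(𝓕 a : SchwartzMap (E d) ℂ))) +
        ENNReal.ofReal (2 * K) * (wInt d (((d:ℝ) - 1)/2) (⇑(𝓕 a : SchwartzMap (E d) ℂ)) * wInt d (s + 1/2) (⇑(𝓕 b : SchwartzMap (E d) ℂ))) := by
        rw [ENNReal.ofReal_mul hK0n, ENNReal.ofReal_mul (p := 2) (by norm_num),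
          ENNReal.ofReal_mul (p := 12 * K0 ^ 2) (by positivity),
          ENNReal.ofReal_mul (p := 12) (by norm_num), ENNReal.ofReal_pow hK0n,
          show ENNReal.ofReal 2 = 2 by simp, show ENNReal.ofReal 12 = 2 * 6 by norm_num]
        ring
    _ ≤ _ := by
        gcongr
        · linarith
        · have : 0 ≤ 12 * K0 ^ 2 * 8 ^ (2 * s) := by positivity
          linarith

lemma wInt_eq (d : ℕ) (s : ℝ) (γ : E d → ℂ)
    (h : Integrable (fun ξ : E d => ‖ξ‖ ^ (2 * s) * ‖γ ξ‖ ^ 2)) :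
    wInt d s γ = ENNReal.ofReal (∫ ξ : E d, ‖ξ‖ ^ (2 * s) * ‖γ ξ‖ ^ 2) := by
  rw [ofReal_integral_eq_lintegral_ofReal h
    (Filter.Eventually.of_forall fun x => by simp only [Pi.zero_apply]; positivity), wInt]
  refine lintegral_congr fun ξ => ?_
  rw [ENNReal.ofReal_mul (by positivity), ENNReal.ofReal_pow (norm_nonneg _), ofReal_norm]

/-- product law `‖ab‖_{Ḣ^s} ≲ ‖a‖_{Ḣ^{(d-1)/2}}‖b‖_{Ḣ^{s+1/2}} + ‖a‖_{Ḣ^s}‖b‖_{L^∞}`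
for Schwartz functions, with a constant depending only on `d` and `s`. -/
theorem product_law_hs (d : ℕ) (hd : 1 ≤ d) (s : ℝ) (hs : 0 < s) :
    ∃ C > (0:ℝ), ∀ a b : SchwartzMap (E d) ℂ,
      Integrable (fun ξ : E d => ‖ξ‖ ^ (2 * (((d:ℝ) - 1)/2)) * ‖𝓕 (⇑a) ξ‖ ^ 2) →
      Integrable (fun ξ : E d => ‖ξ‖ ^ (2 * s) * ‖𝓕 (⇑a) ξ‖ ^ 2) →
      Integrable (fun ξ : E d => ‖ξ‖ ^ (2 * (s + 1/2)) * ‖𝓕 (⇑b) ξ‖ ^ 2) →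
      Integrable (fun ξ : E d => ‖ξ‖ ^ (2 * s) * ‖𝓕 (fun x => a x * b x) ξ‖ ^ 2) ∧
      hNorm d s (fun x => a x * b x) ≤
        C * (hNorm d (((d:ℝ) - 1)/2) a * hNorm d (s + 1/2) b
              + hNorm d s a * ⨆ x : E d, ‖b x‖) := by
  obtain ⟨K, hK, hmain⟩ := main_enn d hd s hs
  refine ⟨√K + 1, by positivity, fun a b hP hS hQ => ?_⟩
  have hbdd : BddAbove (Set.range fun x => ‖b x‖) :=
    ⟨SchwartzMap.seminorm ℝ 0 0 b, by rintro _ ⟨x, rfl⟩; exact SchwartzMap.norm_le_seminorm ℝ b x⟩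
  set M := ⨆ x : E d, ‖b x‖ with hMdef
  have hM : ∀ x, ‖b x‖ ≤ M := fun x => le_ciSup hbdd x
  have hM0 : 0 ≤ M := (norm_nonneg _).trans (hM 0)
  have hab : (fun x => a x * b x) = ⇑(mulS b a) := by
    ext x
    simp [mul_comm]
  have h := hmain a b M hM
  rw [SchwartzMap.fourier_coe, SchwartzMap.fourier_coe, SchwartzMap.fourier_coe, ← hab,
    wInt_eq d _ _ hP, wInt_eq d _ _ hS, wInt_eq d _ _ hQ] at h
  unfold hNorm
  set P := ∫ ξ : E d, ‖ξ‖ ^ (2 * (((d:ℝ) - 1)/2)) * ‖𝓕 (⇑a) ξ‖ ^ 2 with hPd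
  set S := ∫ ξ : E d, ‖ξ‖ ^ (2 * s) * ‖𝓕 (⇑a) ξ‖ ^ 2 with hSd
  set Q := ∫ ξ : E d, ‖ξ‖ ^ (2 * (s + 1/2)) * ‖𝓕 (⇑b) ξ‖ ^ 2 with hQd
  have hP0 : 0 ≤ P := integral_nonneg fun x => by positivity
  have hS0 : 0 ≤ S := integral_nonneg fun x => by positivity
  have hQ0 : 0 ≤ Q := integral_nonneg fun x => by positivity
  rw [← ENNReal.ofReal_pow hM0, ← ENNReal.ofReal_mul (by positivity),
    ← ENNReal.ofReal_mul (by positivity), ← ENNReal.ofReal_mul (by positivity),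
    ← ENNReal.ofReal_mul (by positivity), ← ENNReal.ofReal_add (by positivity) (by positivity)] at h
  have hIntg : Integrable (fun ξ : E d => ‖ξ‖ ^ (2 * s) * ‖𝓕 (fun x => a x * b x) ξ‖ ^ 2) := by
    refine ⟨?_, ?_⟩
    · rw [hab, ← SchwartzMap.fourier_coe]
      have := (𝓕 (mulS b a) : SchwartzMap (E d) ℂ).continuous.measurable
      exact Measurable.aestronglyMeasurable (by fun_prop)
    · rw [hasFiniteIntegral_iff_enorm]
      refine lt_of_le_of_lt (le_trans (le_of_eq ?_) h) ENNReal.ofReal_lt_top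
      refine lintegral_congr fun ξ => ?_
      rw [enorm_mul, enorm_pow, enorm_norm, Real.enorm_of_nonneg (by positivity)]
  refine ⟨hIntg, ?_⟩
  rw [wInt_eq d _ _ hIntg, ENNReal.ofReal_le_ofReal_iff (by positivity)] at h
  set X := ∫ ξ : E d, ‖ξ‖ ^ (2 * s) * ‖𝓕 (fun x => a x * b x) ξ‖ ^ 2
  simp only [← Real.sqrt_eq_rpow]
  have hp := Real.sqrt_nonneg P
  have hq := Real.sqrt_nonneg Q
  have hs' := Real.sqrt_nonneg S
  have hY : 0 ≤ √P * √Q + √S * M := by positivity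
  calc √X ≤ √(K * (√P * √Q + √S * M) ^ 2) := by
        apply Real.sqrt_le_sqrt
        refine h.trans ?_
        rw [← mul_add]
        gcongr
        have e1 : (√P * √Q) ^ 2 = P * Q := by rw [mul_pow, Real.sq_sqrt hP0, Real.sq_sqrt hQ0]
        have e2 : (√S * M) ^ 2 = M ^ 2 * S := by rw [mul_pow, Real.sq_sqrt hS0, mul_comm]
        have e3 : 0 ≤ (√P * √Q) * (√S * M) := by positivity
        nlinarith
    _ = √K * (√P * √Q + √S * M) := by
        rw [Real.sqrt_mul hK, Real.sqrt_sq hY]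
    _ ≤ _ := by gcongr; linarith
end
end

section
/- Let a and b be smooth compactly supported functions on ℝ³ = ℝ²_h × ℝ_v. Then ‖ab‖_{Ḣ^{1/2}(ℝ³)} ≤ C ‖a‖_{Ḣ^{1/2}(ℝ³)} ( ‖∇_h b‖_{L^∞_v L²_h} + ‖b‖_{L^∞(ℝ³)} + ‖∂₃ b‖_{L²_v Ḣ^{1/2}_h} ) for a universal constant C. -/
open MeasureTheory Real
open scoped FourierTransform ENNReal

noncomputable section

/-- Embedding `ℝ² × ℝ → ℝ³`, `(x_h, x₃) ↦ (x₁,x₂,x₃)`. -/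
noncomputable def emb (xh : E 2) (t : ℝ) : E 3 :=
  (EuclideanSpace.equiv (Fin 3) ℝ).symm ![xh 0, xh 1, t]

section PAaux
open Set
namespace PA

/-- weight `t⁻²` -/
def wt (t : ℝ) : ℝ≥0∞ := ENNReal.ofReal ((t ^ 2)⁻¹)

lemma measurable_wt : Measurable wt := by unfold wt; fun_prop

lemma wt_ne_top (t : ℝ) : wt t ≠ ⊤ := ENNReal.ofReal_ne_top

/-- squared difference quotient functional in direction `e` -/
def Qf {d : ℕ} (e : E d) (f : E d → ℂ) : ℝ≥0∞ :=
  ∫⁻ x, ∫⁻ t in Ioi (0:ℝ), ‖f (x + t • e) - f x‖ₑ ^ 2 * wt t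

/-- squared homogeneous Sobolev norm of order one half -/
def HS {d : ℕ} (f : E d → ℂ) : ℝ≥0∞ := ∫⁻ ξ, ‖ξ‖ₑ * ‖𝓕 f ξ‖ₑ ^ 2

def kap : ℝ≥0∞ := ∫⁻ t in Ioi (0:ℝ), ‖(𝐞 t : ℂ) - 1‖ₑ ^ 2 * wt t

lemma norm_char_sub_one_le (t : ℝ) : ‖(𝐞 t : ℂ) - 1‖ ≤ 2 * π * |t| := by
  rw [Real.fourierChar_apply]
  have := Real.norm_exp_I_mul_ofReal_sub_one_le (x := 2 * π * t)
  rw [mul_comm] at this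
  refine this.trans (le_of_eq ?_)
  rw [Real.norm_eq_abs, abs_mul, abs_of_pos (by positivity)]

lemma continuous_char : Continuous (fun t : ℝ => (𝐞 t : ℂ)) := by
  have : (fun t : ℝ => (𝐞 t : ℂ)) = fun t : ℝ => Complex.exp (2 * π * t * Complex.I) := by
    ext t; rw [Real.fourierChar_apply]; push_cast; ring_nf
  rw [this]; fun_prop

lemma norm_char_sub_one_le_two (t : ℝ) : ‖(𝐞 t : ℂ) - 1‖ ≤ 2 := by
  refine (norm_sub_le _ _).trans ?_
  rw [Circle.norm_coe]; norm_num

lemma kap_ne_top : kap ≠ ⊤ := by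
  unfold kap
  rw [← Ioc_union_Ioi_eq_Ioi (zero_le_one (α := ℝ)),
    lintegral_union measurableSet_Ioi (by simp)]
  refine ENNReal.add_ne_top.2 ⟨?_, ?_⟩
  · refine ne_of_lt (lt_of_le_of_lt (setLIntegral_mono (g := fun _ => ENNReal.ofReal ((2*π)^2)) measurable_const ?_) ?_)
    · intro t ht
      rw [← ofReal_norm, ← ENNReal.ofReal_pow (norm_nonneg _), wt, ← ENNReal.ofReal_mul (by positivity)]
      apply ENNReal.ofReal_le_ofReal
      have h := norm_char_sub_one_le t
      rw [abs_of_pos ht.1] at h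
      have ht0 := ht.1
      rw [← div_eq_mul_inv, div_le_iff₀ (by positivity), ← mul_pow]
      exact pow_le_pow_left₀ (norm_nonneg _) h 2
    · simp
  · have hi := (integrableOn_Ioi_rpow_of_lt (a := -2) (c := 1) (by norm_num) one_pos).const_mul 4
    refine ne_of_lt (lt_of_le_of_lt (setLIntegral_mono (g := fun t => ENNReal.ofReal (4 * t ^ (-2:ℝ))) (by fun_prop) ?_) (hi.lintegral_lt_top))
    intro t ht
    have ht0 : (0:ℝ) < t := lt_trans one_pos ht
    rw [← ofReal_norm, ← ENNReal.ofReal_pow (norm_nonneg _), wt, ← ENNReal.ofReal_mul (by positivity)]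
    apply ENNReal.ofReal_le_ofReal
    have h := norm_char_sub_one_le_two t
    rw [Real.rpow_neg ht0.le, Real.rpow_two]
    refine mul_le_mul_of_nonneg_right ?_ (by positivity)
    nlinarith [norm_nonneg ((𝐞 t : ℂ) - 1)]

lemma char_ne_one {t : ℝ} (h0 : 0 < t) (h1 : t < 1) : (𝐞 t : ℂ) ≠ 1 := by
  rw [Real.fourierChar_apply]
  intro h
  rw [Complex.exp_eq_one_iff] at h
  obtain ⟨n, hn⟩ := h
  have hc : (2 * π * Complex.I : ℂ) ≠ 0 := by simp [Real.pi_ne_zero]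
  have h2 : (t : ℂ) = n := by
    have : (2 * π * Complex.I : ℂ) * t = (2 * π * Complex.I : ℂ) * n := by
      push_cast at hn; linear_combination hn
    exact mul_left_cancel₀ hc this
  have h3 : t = (n : ℝ) := by exact_mod_cast h2
  rw [h3] at h0 h1
  have h4 : (0:ℤ) < n := by exact_mod_cast h0
  have h5 : n < (1:ℤ) := by exact_mod_cast h1
  omega

lemma measurable_kint : Measurable fun t : ℝ => ‖(𝐞 t : ℂ) - 1‖ₑ ^ 2 * wt t := by
  have := continuous_char
  have h2 : Continuous fun t : ℝ => ‖(𝐞 t : ℂ) - 1‖ₑ ^ 2 :=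
    (ENNReal.continuous_pow 2).comp ((this.sub continuous_const).enorm)
  exact h2.measurable.mul measurable_wt

lemma kap_ne_zero : kap ≠ 0 := by
  apply ne_of_gt
  unfold kap
  rw [setLIntegral_pos_iff measurable_kint]
  refine lt_of_lt_of_le (b := volume (Ioo (0:ℝ) 1)) (by simp) (measure_mono ?_)
  intro t ht
  refine ⟨?_, ht.1⟩
  have h1 := char_ne_one ht.1 ht.2
  have h2 : 0 < t := ht.1
  simp only [Function.mem_support, ne_eq, mul_eq_zero, not_or, wt]
  refine ⟨by simpa [sub_eq_zero] using h1, ?_⟩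
  simp only [ENNReal.ofReal_eq_zero, not_le]; positivity

lemma kap_scale_pos {y : ℝ} (hy : 0 < y) :
    ∫⁻ t in Ioi (0:ℝ), ‖(𝐞 (t * y) : ℂ) - 1‖ₑ ^ 2 * wt t = kap * ENNReal.ofReal y := by
  have h := Real.map_volume_mul_left (a := y) hy.ne'
  have h1 : ∫⁻ t in Ioi (0:ℝ), ‖(𝐞 (t * y) : ℂ) - 1‖ₑ ^ 2 * wt t =
      ∫⁻ t, (ENNReal.ofReal (y^2)) * (Ioi (0:ℝ)).indicator (fun t => ‖(𝐞 t : ℂ) - 1‖ₑ ^ 2 * wt t) (y * t) := by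
    rw [← lintegral_indicator measurableSet_Ioi]
    congr 1; ext t
    by_cases ht : 0 < t
    · rw [indicator_of_mem (by exact ht), indicator_of_mem (by exact mul_pos hy ht)]
      rw [mul_comm t y, mul_left_comm]
      congr 1
      unfold wt
      rw [← ENNReal.ofReal_mul (by positivity)]
      congr 1; field_simp
    · rw [indicator_of_notMem (by exact ht), indicator_of_notMem, mul_zero]
      simp only [mem_Ioi, not_lt] at *
      exact mul_nonpos_of_nonneg_of_nonpos hy.le ht
  rw [h1, lintegral_const_mul' _ _ ENNReal.ofReal_ne_top,
    ← lintegral_map (f := (Ioi (0:ℝ)).indicator (fun t => ‖(𝐞 t : ℂ) - 1‖ₑ ^ 2 * wt t)) (g := fun t => y * t) (measurable_kint.indicator measurableSet_Ioi) (by fun_prop), h,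
    lintegral_smul_measure, lintegral_indicator measurableSet_Ioi, smul_eq_mul, ← mul_assoc,
    ← ENNReal.ofReal_mul (by positivity), mul_comm]
  unfold kap
  congr 2
  rw [abs_of_pos (by positivity)]; field_simp

lemma enorm_char_neg (s : ℝ) : ‖(𝐞 (-s) : ℂ) - 1‖ₑ = ‖(𝐞 s : ℂ) - 1‖ₑ := by
  have : (𝐞 (-s) : ℂ) - 1 = starRingEnd ℂ ((𝐞 s : ℂ) - 1) := by
    rw [AddChar.map_neg_eq_inv, map_sub, map_one, Circle.coe_inv_eq_conj]
  rw [this, ← ofReal_norm, ← ofReal_norm, RCLike.norm_conj]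

lemma kap_scale (y : ℝ) :
    ∫⁻ t in Ioi (0:ℝ), ‖(𝐞 (t * y) : ℂ) - 1‖ₑ ^ 2 * wt t = kap * ENNReal.ofReal |y| := by
  rcases lt_trichotomy y 0 with h | h | h
  · have := kap_scale_pos (y := -y) (by linarith)
    rw [abs_of_neg h, ← this]
    congr 1; ext t
    rw [mul_neg, enorm_char_neg]
  · subst h; simp
  · rw [abs_of_pos h, kap_scale_pos h]

lemma plancherel {d : ℕ} (f : SchwartzMap (E d) ℂ) :
    ∫⁻ x, ‖f x‖ₑ ^ 2 = ∫⁻ ξ, ‖𝓕 (f : E d → ℂ) ξ‖ₑ ^ 2 := by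
  have key : ∀ g : SchwartzMap (E d) ℂ, ∫⁻ x, ‖g x‖ₑ ^ 2 = ENNReal.ofReal (∫ x, ‖g x‖ ^ 2) := by
    intro g
    rw [ofReal_integral_eq_lintegral_ofReal]
    · congr 1; ext x
      rw [← ofReal_norm, ENNReal.ofReal_pow (norm_nonneg _)]
    · exact (g.memLp 2).integrable_norm_pow (by norm_num)
    · exact Filter.Eventually.of_forall fun x => by positivity
  rw [key f, ← SchwartzMap.fourier_coe, key, SchwartzMap.integral_norm_sq_fourier]

lemma fourier_shift {d : ℕ} (f : E d → ℂ) (hf : Integrable f) (v ξ : E d) :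
    𝓕 (fun x => f (x + v) - f x) ξ = ((𝐞 (inner ℝ v ξ) : ℂ) - 1) * 𝓕 f ξ := by
  have h1 := congrFun (VectorFourier.fourierIntegral_comp_add_right 𝐞 volume (innerₗ (E d)) f v) ξ
  have h2 : 𝓕 (fun x => f (x + v) - f x) ξ = 𝓕 (f ∘ fun x => x + v) ξ - 𝓕 f ξ := by
    simp only [Real.fourier_eq, smul_sub, Function.comp]
    rw [integral_sub]
    · exact (Real.fourierIntegral_convergent_iff ξ).2 (hf.comp_add_right v)
    · exact (Real.fourierIntegral_convergent_iff ξ).2 hf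
  rw [h2, sub_mul, one_mul]
  congr 1

/-- smooth compactly supported -/
def CC {d : ℕ} (f : E d → ℂ) : Prop := ContDiff ℝ (⊤ : ℕ∞) f ∧ HasCompactSupport f

def CC.S {d : ℕ} {f : E d → ℂ} (h : CC f) : SchwartzMap (E d) ℂ := h.2.toSchwartzMap h.1

lemma CC.S_coe {d : ℕ} {f : E d → ℂ} (h : CC f) : (h.S : E d → ℂ) = f := rfl

lemma CC.integrable {d : ℕ} {f : E d → ℂ} (h : CC f) : Integrable f := h.S.integrable

lemma CC.sub {d : ℕ} {f g : E d → ℂ} (hf : CC f) (hg : CC g) : CC (fun x => f x - g x) :=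
  ⟨hf.1.sub hg.1, hf.2.sub hg.2⟩

lemma CC.mul {d : ℕ} {f g : E d → ℂ} (hf : CC f) (hg : CC g) : CC (fun x => f x * g x) :=
  ⟨hf.1.mul hg.1, hf.2.mul_right⟩

lemma CC.shift {d : ℕ} {f : E d → ℂ} (hf : CC f) (v : E d) : CC (fun x => f (x + v)) :=
  ⟨hf.1.comp (contDiff_id.add contDiff_const),
   hf.2.comp_homeomorph (Homeomorph.addRight v)⟩

lemma CC.cont_fourier {d : ℕ} {f : E d → ℂ} (hf : CC f) : Continuous (𝓕 f) :=
  (𝓕 hf.S).continuous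

lemma CC.plancherel {d : ℕ} {f : E d → ℂ} (hf : CC f) : ∫⁻ x, ‖f x‖ₑ ^ 2 = ∫⁻ ξ, ‖𝓕 f ξ‖ₑ ^ 2 :=
  PA.plancherel hf.S

lemma Qf_eq {d : ℕ} {f : E d → ℂ} (hf : CC f) (e : E d) :
    Qf e f = kap * ∫⁻ ξ, ENNReal.ofReal |inner ℝ e ξ| * ‖𝓕 f ξ‖ₑ ^ 2 := by
  unfold Qf
  have hcf := hf.1.continuous
  have hcF := hf.cont_fourier
  have hcc := continuous_char
  have hw := measurable_wt
  rw [lintegral_lintegral_swap]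
  swap
  · apply Measurable.aemeasurable
    refine Measurable.mul ?_ (hw.comp measurable_snd)
    refine Continuous.measurable ?_
    refine (ENNReal.continuous_pow 2).comp (Continuous.enorm ?_)
    fun_prop
  have h1 : ∀ t : ℝ, ∫⁻ x, ‖f (x + t • e) - f x‖ₑ ^ 2 * wt t =
      ∫⁻ ξ, ‖(𝐞 (t * inner ℝ e ξ) : ℂ) - 1‖ₑ ^ 2 * wt t * ‖𝓕 f ξ‖ₑ ^ 2 := by
    intro t
    rw [lintegral_mul_const' _ _ (wt_ne_top t), ((hf.shift (t • e)).sub hf).plancherel,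
      ← lintegral_mul_const' _ _ (wt_ne_top t)]
    congr 1; ext ξ
    rw [fourier_shift f hf.integrable, enorm_mul, mul_pow, real_inner_smul_left]
    ring
  simp_rw [h1]
  rw [lintegral_lintegral_swap]
  swap
  · apply Measurable.aemeasurable
    refine Measurable.mul (Measurable.mul ?_ (hw.comp measurable_fst)) ?_
    · refine Continuous.measurable ?_
      refine (ENNReal.continuous_pow 2).comp (Continuous.enorm ?_)
      refine Continuous.sub (hcc.comp ?_) continuous_const
      fun_prop
    · refine Continuous.measurable ?_
      refine (ENNReal.continuous_pow 2).comp (Continuous.enorm ?_)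
      fun_prop
  rw [← lintegral_const_mul' _ _ kap_ne_top]
  congr 1; ext ξ
  rw [lintegral_mul_const' _ _ (by finiteness), kap_scale, mul_assoc]

/-- basis vector -/
abbrev bv {d : ℕ} (j : Fin d) : E d := EuclideanSpace.single j 1

lemma inner_bv {d : ℕ} (j : Fin d) (ξ : E d) : inner ℝ (bv j) ξ = ξ j := by
  rw [EuclideanSpace.inner_single_left]; simp

lemma Qf_le_HS {d : ℕ} {f : E d → ℂ} (hf : CC f) (j : Fin d) : Qf (bv j) f ≤ kap * HS f := by
  rw [Qf_eq hf]
  gcongr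
  unfold HS
  gcongr with ξ
  rw [inner_bv, ← ofReal_norm]
  exact ENNReal.ofReal_le_ofReal (PiLp.norm_apply_le ξ j)

lemma HS_le_Qf {d : ℕ} {f : E d → ℂ} (hf : CC f) : kap * HS f ≤ ∑ j, Qf (bv j) f := by
  simp_rw [Qf_eq hf]
  rw [← Finset.mul_sum]
  gcongr
  rw [← lintegral_finsetSum]
  · unfold HS
    gcongr with ξ
    rw [← Finset.sum_mul]
    gcongr
    simp_rw [inner_bv]
    rw [← ENNReal.ofReal_sum_of_nonneg (fun i _ => abs_nonneg _), ← ofReal_norm]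
    apply ENNReal.ofReal_le_ofReal
    rw [EuclideanSpace.norm_eq]
    refine Real.sqrt_le_iff.2 ⟨by positivity, ?_⟩
    simp_rw [Real.norm_eq_abs]
    exact Finset.sum_sq_le_sq_sum_of_nonneg (fun i _ => abs_nonneg _)
  · intro j _
    have := hf.cont_fourier
    have h1 : Continuous fun ξ : E d => ENNReal.ofReal |inner ℝ (bv j) ξ| :=
      ENNReal.continuous_ofReal.comp (by fun_prop)
    exact h1.measurable.mul ((ENNReal.continuous_pow 2).comp this.enorm).measurable

lemma HS_ne_top {d : ℕ} {f : E d → ℂ} (hf : CC f) : HS f ≠ ⊤ := by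
  obtain ⟨M, hM⟩ : ∃ M, ∀ ξ, ‖𝓕 hf.S ξ‖ ≤ M := by
    obtain ⟨M, hM⟩ := (𝓕 hf.S).decay 0 0
    exact ⟨M, fun ξ => by simpa using hM.2 ξ⟩
  have h1 := (((𝓕 hf.S).integrable_pow_mul volume 1).const_mul M).lintegral_lt_top
  refine ne_of_lt (lt_of_le_of_lt ?_ h1)
  unfold HS
  refine lintegral_mono fun ξ => ?_
  have hM1 := hM ξ
  rw [← ofReal_norm, ← ofReal_norm, ← ENNReal.ofReal_pow (norm_nonneg _),
    ← ENNReal.ofReal_mul (norm_nonneg _)]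
  apply ENNReal.ofReal_le_ofReal
  rw [SchwartzMap.fourier_coe, hf.S_coe] at *
  have := norm_nonneg (𝓕 f ξ)
  have := norm_nonneg ξ
  calc ‖ξ‖ * ‖𝓕 f ξ‖ ^ 2 = (‖ξ‖ * ‖𝓕 f ξ‖) * ‖𝓕 f ξ‖ := by ring
    _ ≤ (‖ξ‖ * ‖𝓕 f ξ‖) * M := by gcongr
    _ = _ := by ring


lemma cs_sq {α : Type*} [MeasurableSpace α] (μ : Measure α) {f g : α → ℝ≥0∞}
    (hf : AEMeasurable f μ) (hg : AEMeasurable g μ) :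
    (∫⁻ a, f a * g a ∂μ) ^ 2 ≤ (∫⁻ a, f a ^ 2 ∂μ) * ∫⁻ a, g a ^ 2 ∂μ := by
  have h := ENNReal.lintegral_mul_le_Lp_mul_Lq μ Real.HolderConjugate.two_two hf hg
  simp only [Pi.mul_apply, ENNReal.rpow_two] at h
  refine (pow_le_pow_left' h 2).trans (le_of_eq ?_)
  rw [mul_pow, ← ENNReal.rpow_two, ← ENNReal.rpow_two, ← ENNReal.rpow_mul, ← ENNReal.rpow_mul]
  norm_num

lemma lint_rpow_Ioc {a t : ℝ} (ha : -1 < a) (ht : 0 ≤ t) :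
    ∫⁻ s in Ioc 0 t, ENNReal.ofReal (s ^ a) = ENNReal.ofReal (t ^ (a+1) / (a+1)) := by
  rw [← ofReal_integral_eq_lintegral_ofReal]
  · rw [← intervalIntegral.integral_of_le ht, integral_rpow (Or.inl ha)]
    rw [Real.zero_rpow (by linarith), sub_zero]
  · have := intervalIntegral.intervalIntegrable_rpow' (a := 0) (b := t) ha
    rwa [intervalIntegrable_iff_integrableOn_Ioc_of_le ht] at this
  · filter_upwards [ae_restrict_mem measurableSet_Ioc] with s hs
    exact Real.rpow_nonneg hs.1.le _

lemma lint_rpow_Ici {a t : ℝ} (ha : a < -1) (ht : 0 < t) :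
    ∫⁻ s in Ici t, ENNReal.ofReal (s ^ a) = ENNReal.ofReal (- t ^ (a+1) / (a+1)) := by
  rw [setLIntegral_congr Ioi_ae_eq_Ici.symm, ← ofReal_integral_eq_lintegral_ofReal]
  · rw [integral_Ioi_rpow_of_lt ha ht]
  · exact integrableOn_Ioi_rpow_of_lt ha ht
  · filter_upwards [ae_restrict_mem measurableSet_Ioi] with s hs
    exact Real.rpow_nonneg (ht.trans hs).le _

lemma ofReal_sq {x : ℝ} (hx : 0 ≤ x) : ENNReal.ofReal x ^ 2 = ENNReal.ofReal (x ^ 2) :=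
  (ENNReal.ofReal_pow hx 2).symm

/-- Hardy inequality -/
lemma hardy {F : ℝ → ℝ≥0∞} (hF : Measurable F) :
    ∫⁻ t in Ioi (0:ℝ), (∫⁻ s in Ioc 0 t, F s) ^ 2 * wt t ≤ 4 * ∫⁻ s in Ioi (0:ℝ), F s ^ 2 := by
  have h1 : ∀ t ∈ Ioi (0:ℝ), (∫⁻ s in Ioc 0 t, F s) ^ 2 * wt t ≤
      ∫⁻ s in Ioi (0:ℝ), {p : ℝ × ℝ | p.2 ≤ p.1}.indicator
        (fun p => ENNReal.ofReal (2 * p.1 ^ (-3/2 : ℝ)) * (F p.2 ^ 2 * ENNReal.ofReal (p.2 ^ (1/2:ℝ)))) (t, s) := by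
    intro t ht
    have ht : 0 < t := ht
    have e1 : ∫⁻ s in Ioc 0 t, F s =
        ∫⁻ s in Ioc 0 t, (F s * ENNReal.ofReal (s ^ (1/4:ℝ))) * ENNReal.ofReal (s ^ (-1/4:ℝ)) := by
      refine setLIntegral_congr_fun measurableSet_Ioc fun s hs => ?_
      have hs0 : 0 < s := hs.1
      rw [mul_assoc, ← ENNReal.ofReal_mul (by positivity), ← Real.rpow_add hs0]
      norm_num
    have e2 := cs_sq (volume.restrict (Ioc 0 t)) (f := fun s => F s * ENNReal.ofReal (s ^ (1/4:ℝ)))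
      (g := fun s => ENNReal.ofReal (s ^ (-1/4:ℝ))) (by fun_prop) (by fun_prop)
    rw [← e1] at e2
    have e3 : ∫⁻ s in Ioc 0 t, (ENNReal.ofReal (s ^ (-1/4:ℝ))) ^ 2 = ENNReal.ofReal (2 * t ^ (1/2:ℝ)) := by
      have := lint_rpow_Ioc (a := -1/2) (by norm_num) ht.le
      rw [show (2 * t ^ (1/2:ℝ)) = t ^ (-1/2 + 1 : ℝ) / (-1/2+1) by norm_num; ring, ← this]
      refine setLIntegral_congr_fun measurableSet_Ioc fun s hs => ?_
      have hs0 : 0 < s := hs.1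
      rw [ofReal_sq (by positivity), ← Real.rpow_two, ← Real.rpow_mul hs0.le]
      norm_num
    have e4 : ∫⁻ s in Ioc 0 t, (F s * ENNReal.ofReal (s ^ (1/4:ℝ))) ^ 2 =
        ∫⁻ s in Ioc 0 t, F s ^ 2 * ENNReal.ofReal (s ^ (1/2:ℝ)) := by
      refine setLIntegral_congr_fun measurableSet_Ioc fun s hs => ?_
      have hs0 : 0 < s := hs.1
      rw [mul_pow, ofReal_sq (by positivity), ← Real.rpow_two (s ^ _), ← Real.rpow_mul hs0.le]
      norm_num
    rw [e3, e4] at e2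
    calc (∫⁻ s in Ioc 0 t, F s) ^ 2 * wt t
        ≤ ((∫⁻ s in Ioc 0 t, F s ^ 2 * ENNReal.ofReal (s ^ (1/2:ℝ))) * ENNReal.ofReal (2 * t ^ (1/2:ℝ))) * wt t := by
          gcongr
      _ = ENNReal.ofReal (2 * t ^ (-3/2:ℝ)) * ∫⁻ s in Ioc 0 t, F s ^ 2 * ENNReal.ofReal (s ^ (1/2:ℝ)) := by
          rw [mul_assoc, mul_comm]
          congr 1
          unfold wt
          rw [← ENNReal.ofReal_mul (by positivity), ← Real.rpow_two, ← Real.rpow_neg ht.le, mul_assoc, ← Real.rpow_add ht]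
          norm_num
      _ = _ := by
          rw [← lintegral_const_mul' _ _ ENNReal.ofReal_ne_top, ← lintegral_indicator measurableSet_Ioc,
            ← lintegral_indicator measurableSet_Ioi]
          congr 1; ext s
          by_cases h0 : 0 < s <;> by_cases h1 : s ≤ t <;> simp [indicator, h0, h1]
  refine (setLIntegral_mono' measurableSet_Ioi h1).trans ?_
  rw [lintegral_lintegral_swap]
  swap
  · apply Measurable.aemeasurable
    refine Measurable.indicator (by fun_prop) (measurableSet_le (by fun_prop) (by fun_prop))
  rw [← lintegral_const_mul' _ _ (by norm_num)]
  refine setLIntegral_mono' measurableSet_Ioi fun s hs => ?_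
  have hs : 0 < s := hs
  have e5 : ∫⁻ t in Ioi (0:ℝ), {p : ℝ × ℝ | p.2 ≤ p.1}.indicator
        (fun p => ENNReal.ofReal (2 * p.1 ^ (-3/2 : ℝ)) * (F p.2 ^ 2 * ENNReal.ofReal (p.2 ^ (1/2:ℝ)))) (t, s)
      = ∫⁻ t in Ici s, (ENNReal.ofReal (t ^ (-3/2 : ℝ))) * (2 * (F s ^ 2 * ENNReal.ofReal (s ^ (1/2:ℝ)))) := by
    rw [← lintegral_indicator measurableSet_Ioi, ← lintegral_indicator measurableSet_Ici]
    congr 1; ext t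
    by_cases h1 : s ≤ t
    · have h0 : 0 < t := hs.trans_le h1
      simp only [indicator, mem_Ioi, h0, mem_ofPred_eq, h1, if_true, mem_Ici]
      rw [ENNReal.ofReal_mul (by norm_num), ENNReal.ofReal_ofNat]; ring
    · simp [indicator, h1]
  rw [e5, lintegral_mul_const _ (by fun_prop), lint_rpow_Ici (by norm_num) hs]
  apply le_of_eq
  calc _ = F s ^ 2 * (ENNReal.ofReal 2 * (ENNReal.ofReal (- s ^ (-3/2 + 1 : ℝ) / (-3/2 + 1)) * ENNReal.ofReal (s ^ (1/2:ℝ)))) := by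
        rw [ENNReal.ofReal_ofNat]; ring
    _ = F s ^ 2 * ENNReal.ofReal 4 := by
        congr 1
        rw [show (-3/2 + 1 : ℝ) = -1/2 by norm_num, show - s ^ (-1/2 : ℝ) / (-1/2) = 2 * s ^ (-1/2:ℝ) by ring,
          ← ENNReal.ofReal_mul (by positivity), ← ENNReal.ofReal_mul (by positivity), mul_assoc, ← Real.rpow_add hs]
        norm_num
    _ = _ := by rw [ENNReal.ofReal_ofNat]; ring

/-- Hardy for increments -/
lemma hardy_incr {g g' : ℝ → ℂ} (hg : ∀ t, HasDerivAt g (g' t) t) (hg' : Continuous g') (x : ℝ) :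
    ∫⁻ t in Ioi (0:ℝ), ‖g (x + t) - g x‖ₑ ^ 2 * wt t ≤ 4 * ∫⁻ s, ‖g' s‖ₑ ^ 2 := by
  have hm : Measurable fun s => ‖g' (x + s)‖ₑ := by
    have : Continuous fun s => g' (x + s) := by fun_prop
    exact this.enorm.measurable
  have h := hardy hm
  calc _ ≤ ∫⁻ t in Ioi (0:ℝ), (∫⁻ s in Ioc 0 t, ‖g' (x + s)‖ₑ) ^ 2 * wt t := by
        refine setLIntegral_mono' measurableSet_Ioi fun t ht => ?_
        have ht : 0 < t := ht
        gcongr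
        have e : ∫ s in (0:ℝ)..t, g' (x + s) = g (x + t) - g x := by
          have h2 : ∀ s ∈ uIcc 0 t, HasDerivAt (fun s => g (x + s)) (g' (x + s)) s := by
            intro s _
            simpa using (hg (x + s)).comp_const_add x s
          rw [intervalIntegral.integral_eq_sub_of_hasDerivAt h2, add_zero]
          exact Continuous.intervalIntegrable (by fun_prop) _ _
        rw [← e, intervalIntegral.integral_of_le ht.le]
        exact enorm_integral_le_lintegral_enorm _
    _ ≤ 4 * ∫⁻ s in Ioi (0:ℝ), ‖g' (x + s)‖ₑ ^ 2 := h
    _ ≤ 4 * ∫⁻ s, ‖g' (x + s)‖ₑ ^ 2 := by gcongr; exact Measure.restrict_le_self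
    _ = _ := by rw [lintegral_add_left_eq_self (fun s => ‖g' s‖ₑ ^ 2) x]

/-- radial constant -/
def Cr : ℝ≥0∞ := ∫⁻ ξ : E 2 in Metric.ball 0 1, ENNReal.ofReal (‖ξ‖ ^ (-3/2 : ℝ))

lemma Cr_ne_top : Cr ≠ ⊤ := by
  have h : IntegrableOn (fun ξ : E 2 => ‖ξ‖ ^ (-3/2 : ℝ)) (Metric.ball 0 1) := by
    refine integrableOn_ball_of_norm_le_rpow (μ := volume) (C := 1) (α := 3/2) (by simp) (by simp; norm_num) ?_ ?_
    · refine Filter.Eventually.of_forall fun x => ?_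
      rw [Real.norm_of_nonneg (by positivity), one_mul]
      norm_num
    · exact Measurable.aestronglyMeasurable (by fun_prop)
  exact ne_of_lt h.lintegral_lt_top

lemma rad {R : ℝ} (hR : 0 < R) :
    ∫⁻ ξ : E 2 in Metric.ball 0 R, ENNReal.ofReal (‖ξ‖ ^ (-3/2 : ℝ)) = Cr * ENNReal.ofReal (R ^ (1/2:ℝ)) := by
  have h := Measure.map_addHaar_smul (volume : Measure (E 2)) (r := R⁻¹) (by positivity)
  have h1 : ∫⁻ ξ : E 2 in Metric.ball 0 R, ENNReal.ofReal (‖ξ‖ ^ (-3/2 : ℝ)) =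
     ∫⁻ ξ : E 2, ENNReal.ofReal (R ^ (-3/2:ℝ)) * (Metric.ball (0 : E 2) 1).indicator (fun ξ => ENNReal.ofReal (‖ξ‖ ^ (-3/2 : ℝ))) (R⁻¹ • ξ) := by
    rw [← lintegral_indicator Metric.isOpen_ball.measurableSet]
    congr 1; ext ξ
    have hn : ‖R⁻¹ • ξ‖ = R⁻¹ * ‖ξ‖ := by rw [norm_smul, Real.norm_of_nonneg (by positivity)]
    have hiff : R⁻¹ * ‖ξ‖ < 1 ↔ ‖ξ‖ < R := by
      rw [inv_mul_lt_iff₀ hR, mul_one]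
    by_cases hx : ‖ξ‖ < R
    · simp only [indicator, Metric.mem_ball, dist_zero_right, hn, hiff, hx, if_true]
      rw [← ENNReal.ofReal_mul (by positivity), Real.mul_rpow (by positivity) (by positivity), Real.inv_rpow hR.le]
      congr 1; field_simp
    · simp [indicator, hn, hiff, hx]
  have hm : Measurable ((Metric.ball (0 : E 2) 1).indicator (fun ξ => ENNReal.ofReal (‖ξ‖ ^ (-3/2 : ℝ)))) :=
    Measurable.indicator (by fun_prop) Metric.isOpen_ball.measurableSet
  rw [h1, lintegral_const_mul' _ _ ENNReal.ofReal_ne_top, ← lintegral_map hm (by fun_prop), h,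
    lintegral_smul_measure, lintegral_indicator Metric.isOpen_ball.measurableSet, smul_eq_mul, ← mul_assoc,
    ← ENNReal.ofReal_mul (by positivity), mul_comm]
  unfold Cr
  congr 2
  rw [abs_of_pos (by positivity)]
  simp only [finrank_euclideanSpace, Fintype.card_fin, inv_pow, inv_inv]
  rw [← Real.rpow_natCast, ← Real.rpow_add hR]; norm_num

lemma m_sq {F : E 2 → ℝ≥0∞} (hF : Measurable F) {R : ℝ} (hR : 0 < R) :
    (∫⁻ ξ in Metric.ball 0 R, F ξ) ^ 2 ≤
      Cr * ENNReal.ofReal (R ^ (1/2:ℝ)) * ∫⁻ ξ in Metric.ball 0 R, ENNReal.ofReal (‖ξ‖ ^ (3/2:ℝ)) * F ξ ^ 2 := by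
  have e2 := cs_sq (volume.restrict (Metric.ball (0 : E 2) R)) (f := fun s => F s * ENNReal.ofReal (‖s‖ ^ (3/4:ℝ)))
      (g := fun s => ENNReal.ofReal (‖s‖ ^ (-3/4:ℝ))) (by fun_prop) (by fun_prop)
  have hne : ∀ᵐ ξ ∂(volume.restrict (Metric.ball (0 : E 2) R)), ξ ≠ 0 :=
    ae_restrict_of_ae (by simp [ae_iff])
  have e1 : ∫⁻ ξ in Metric.ball 0 R, F ξ =
      ∫⁻ s in Metric.ball 0 R, (F s * ENNReal.ofReal (‖s‖ ^ (3/4:ℝ))) * ENNReal.ofReal (‖s‖ ^ (-3/4:ℝ)) := by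
    refine lintegral_congr_ae ?_
    filter_upwards [hne] with s hs
    have hs0 : 0 < ‖s‖ := norm_pos_iff.2 hs
    rw [mul_assoc, ← ENNReal.ofReal_mul (by positivity), ← Real.rpow_add hs0]
    norm_num
  rw [e1]
  refine e2.trans (le_of_eq ?_)
  rw [← rad hR, mul_comm]
  congr 1
  · congr 1; ext s
    rw [ofReal_sq (by positivity), ← Real.rpow_two, ← Real.rpow_mul (norm_nonneg _)]
    norm_num
  · congr 1; ext s
    rw [mul_pow, ofReal_sq (by positivity), ← Real.rpow_two (‖s‖ ^ _), ← Real.rpow_mul (norm_nonneg _), mul_comm]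
    norm_num

lemma m_sq2 {F : E 2 → ℝ≥0∞} (hF : Measurable F) {R : ℝ} (hR : 0 < R) :
    (∫⁻ ξ in Metric.ball 0 R, F ξ) ^ 2 ≤ Cr * ENNReal.ofReal R * ∫⁻ ξ, ‖ξ‖ₑ * F ξ ^ 2 := by
  refine (m_sq hF hR).trans ?_
  have : ∫⁻ ξ in Metric.ball 0 R, ENNReal.ofReal (‖ξ‖ ^ (3/2:ℝ)) * F ξ ^ 2 ≤
      ENNReal.ofReal (R ^ (1/2:ℝ)) * ∫⁻ ξ, ‖ξ‖ₑ * F ξ ^ 2 := by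
    rw [← lintegral_const_mul' _ _ ENNReal.ofReal_ne_top]
    refine (setLIntegral_mono' Metric.isOpen_ball.measurableSet (fun ξ hξ => ?_)).trans (setLIntegral_le_lintegral _ _)
    rw [← mul_assoc]
    gcongr
    rw [← ofReal_norm, ← ENNReal.ofReal_mul (by positivity)]
    apply ENNReal.ofReal_le_ofReal
    have hlt : ‖ξ‖ ≤ R := by simpa using (Metric.mem_ball.1 hξ).le
    rw [show (3/2:ℝ) = 1/2 + 1 by norm_num, Real.rpow_add_one' (norm_nonneg _) (by norm_num)]
    gcongr
  refine (mul_le_mul_right this _).trans (le_of_eq ?_)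
  rw [← mul_assoc, mul_assoc Cr, ← ENNReal.ofReal_mul (by positivity), ← Real.rpow_add hR]
  norm_num

lemma low_hardy {F : E 2 → ℝ≥0∞} (hF : Measurable F) :
    ∫⁻ t in Ioi (0:ℝ), (∫⁻ ξ in Metric.ball 0 (2 * t⁻¹), F ξ) ^ 2 ≤ 4 * Cr * ∫⁻ ξ, ‖ξ‖ₑ * F ξ ^ 2 := by
  have h1 : ∀ t ∈ Ioi (0:ℝ), (∫⁻ ξ in Metric.ball 0 (2 * t⁻¹), F ξ) ^ 2 ≤
      Cr * ∫⁻ ξ, {p : ℝ × E 2 | ‖p.2‖ < 2 * p.1⁻¹}.indicator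
        (fun p => ENNReal.ofReal ((2 * p.1⁻¹) ^ (1/2 : ℝ)) * (ENNReal.ofReal (‖p.2‖ ^ (3/2:ℝ)) * F p.2 ^ 2)) (t, ξ) := by
    intro t ht
    have ht : 0 < t := ht
    refine (m_sq hF (R := 2 * t⁻¹) (by positivity)).trans (le_of_eq ?_)
    rw [mul_assoc]
    congr 1
    rw [← lintegral_const_mul' _ _ ENNReal.ofReal_ne_top, ← lintegral_indicator Metric.isOpen_ball.measurableSet]
    congr 1; ext ξ
    simp [indicator]
  refine (setLIntegral_mono' measurableSet_Ioi h1).trans ?_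
  rw [lintegral_const_mul' _ _ Cr_ne_top, mul_comm 4, mul_assoc]
  gcongr
  rw [lintegral_lintegral_swap]
  swap
  · apply Measurable.aemeasurable
    refine Measurable.indicator (by fun_prop) (measurableSet_lt (by fun_prop) (by fun_prop))
  rw [← lintegral_const_mul' _ _ (by norm_num)]
  refine lintegral_mono_ae ?_
  have hne : ∀ᵐ ξ ∂(volume : Measure (E 2)), ξ ≠ 0 := by simp [ae_iff]
  filter_upwards [hne] with ξ hξ
  have hs : 0 < ‖ξ‖ := norm_pos_iff.2 hξ
  calc _ ≤ ∫⁻ t in Ioc 0 (2 * ‖ξ‖⁻¹), (ENNReal.ofReal (t ^ (-1/2 : ℝ))) * (ENNReal.ofReal (2 ^ (1/2:ℝ)) * (ENNReal.ofReal (‖ξ‖ ^ (3/2:ℝ)) * F ξ ^ 2)) := by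
        rw [← lintegral_indicator measurableSet_Ioi, ← lintegral_indicator measurableSet_Ioc]
        refine lintegral_mono fun t => ?_
        by_cases h0 : 0 < t
        · by_cases h1 : ‖ξ‖ < 2 * t⁻¹
          · have h2 : t ≤ 2 * ‖ξ‖⁻¹ := by
              rw [← div_eq_mul_inv, lt_div_iff₀ h0] at h1
              rw [← div_eq_mul_inv, le_div_iff₀ hs]; linarith
            simp only [indicator, mem_Ioi, h0, mem_ofPred_eq, h1, if_true, mem_Ioc, h2, and_self]
            rw [Real.mul_rpow (by positivity) (by positivity), ENNReal.ofReal_mul (by positivity),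
              Real.inv_rpow h0.le, ← Real.rpow_neg h0.le]
            apply le_of_eq
            rw [show (-(1/2) : ℝ) = -1/2 by norm_num]; ring
          · simp [indicator, h1]
        · simp [indicator, h0]
    _ = 4 * (‖ξ‖ₑ * F ξ ^ 2) := by
        rw [lintegral_mul_const _ (by fun_prop), lint_rpow_Ioc (by norm_num) (by positivity)]
        rw [← mul_assoc, ← mul_assoc, ← mul_assoc, ← ENNReal.ofReal_mul (by positivity), ← ENNReal.ofReal_mul (by positivity),
          ← ENNReal.ofReal_ofNat 4, ← ofReal_norm, ← ENNReal.ofReal_mul (by positivity)]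
        congr 2
        rw [show (-1/2 + 1 : ℝ) = 1/2 by norm_num, Real.mul_rpow (by positivity) (by positivity), Real.inv_rpow hs.le,
          show (3/2:ℝ) = 1/2 + 1 by norm_num, Real.rpow_add_one' (norm_nonneg _) (by norm_num)]
        have h2 : (2:ℝ) ^ (1/2:ℝ) * 2 ^ (1/2:ℝ) = 2 := by
          rw [← Real.rpow_add (by norm_num)]; norm_num
        field_simp
        linear_combination 2 * h2

lemma high_int {F : E 2 → ℝ≥0∞} (hF : Measurable F) :
    ∫⁻ t in Ioi (0:ℝ), (∫⁻ ξ in {ξ | t⁻¹ ≤ ‖ξ‖}, F ξ ^ 2) * wt t ≤ ∫⁻ ξ, ‖ξ‖ₑ * F ξ ^ 2 := by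
  have h1 : ∀ t ∈ Ioi (0:ℝ), (∫⁻ ξ in {ξ : E 2 | t⁻¹ ≤ ‖ξ‖}, F ξ ^ 2) * wt t =
      ∫⁻ ξ, {p : ℝ × E 2 | p.1⁻¹ ≤ ‖p.2‖}.indicator
        (fun p => F p.2 ^ 2 * wt p.1) (t, ξ) := by
    intro t ht
    rw [← lintegral_mul_const' _ _ (wt_ne_top t), ← lintegral_indicator (measurableSet_le (by fun_prop) (by fun_prop))]
    rfl
  rw [setLIntegral_congr_fun measurableSet_Ioi h1]
  have hw := measurable_wt
  rw [lintegral_lintegral_swap]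
  swap
  · apply Measurable.aemeasurable
    refine Measurable.indicator (by fun_prop) (measurableSet_le (by fun_prop) (by fun_prop))
  refine lintegral_mono fun ξ => ?_
  by_cases hξ : ξ = 0
  · subst hξ
    rw [← lintegral_indicator measurableSet_Ioi]
    refine le_of_eq_of_le ?_ (zero_le)
    refine (lintegral_congr fun t => ?_).trans lintegral_zero
    by_cases h0 : 0 < t
    · simp [indicator, h0]
    · simp [indicator, h0]
  have hs : 0 < ‖ξ‖ := norm_pos_iff.2 hξ
  calc _ ≤ ∫⁻ t in Ici (‖ξ‖⁻¹), (ENNReal.ofReal (t ^ (-2 : ℝ))) * F ξ ^ 2 := by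
        rw [← lintegral_indicator measurableSet_Ioi, ← lintegral_indicator measurableSet_Ici]
        refine lintegral_mono fun t => ?_
        by_cases h0 : 0 < t
        · by_cases h1 : t⁻¹ ≤ ‖ξ‖
          · have h2 : ‖ξ‖⁻¹ ≤ t := inv_le_of_inv_le₀ h0 h1
            simp only [indicator, mem_Ioi, h0, mem_ofPred_eq, h1, if_true, mem_Ici, h2, wt]
            rw [Real.rpow_neg h0.le, Real.rpow_two, mul_comm]
          · simp [indicator, h1]
        · simp [indicator, h0]
    _ = _ := by
        rw [lintegral_mul_const _ (by fun_prop), lint_rpow_Ici (by norm_num) (by positivity), ← ofReal_norm]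
        congr 2
        rw [show (-2 + 1 : ℝ) = -1 by norm_num, Real.rpow_neg_one, inv_inv]; ring


def chi : ContDiffBump (0 : E 2) := ⟨1, 2, by norm_num, by norm_num⟩

def low (f : E 2 → ℂ) (R : ℝ) (x : E 2) : ℂ :=
  ∫ ξ, 𝐞 (inner ℝ ξ x) • (((chi (R⁻¹ • ξ) : ℝ) : ℂ) * 𝓕 f ξ)

lemma measurable_low {f : E 2 → ℂ} (hf : CC f) : Measurable (fun p : ℝ × E 2 => low f p.1 p.2) := by
  have hcF := hf.cont_fourier
  have hcc := continuous_char
  have hchi : Continuous chi := chi.continuous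
  refine StronglyMeasurable.measurable ?_
  unfold low
  refine StronglyMeasurable.integral_prod_right (f := fun (p : ℝ × E 2) (ξ : E 2) => 𝐞 (inner ℝ ξ p.2) • (((chi (p.1⁻¹ • ξ) : ℝ) : ℂ) * 𝓕 f ξ)) ?_
  apply Measurable.stronglyMeasurable
  simp only [Function.uncurry_def, Circle.smul_def, smul_eq_mul]
  refine Measurable.mul ?_ (Measurable.mul ?_ ?_)
  · refine Continuous.measurable (hcc.comp ?_); fun_prop
  · refine Complex.measurable_ofReal.comp (hchi.measurable.comp ?_)
    fun_prop
  · exact Continuous.measurable (hcF.comp continuous_snd)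

lemma chi_le (ξ : E 2) : ‖((chi ξ : ℝ) : ℂ)‖ ≤ 1 := by
  rw [Complex.norm_real, Real.norm_of_nonneg chi.nonneg]; exact chi.le_one

lemma low_le {f : E 2 → ℂ} {R : ℝ} (hR : 0 < R) (x : E 2) :
    ‖low f R x‖ₑ ≤ ∫⁻ ξ in Metric.ball 0 (2 * R), ‖𝓕 f ξ‖ₑ := by
  unfold low
  refine (enorm_integral_le_lintegral_enorm _).trans ?_
  rw [← lintegral_indicator Metric.isOpen_ball.measurableSet]
  refine lintegral_mono fun ξ => ?_
  have hn : ‖R⁻¹ • ξ‖ = R⁻¹ * ‖ξ‖ := by rw [norm_smul, Real.norm_of_nonneg (by positivity)]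
  by_cases h : ‖ξ‖ < 2 * R
  · rw [indicator_of_mem (by simpa using h), ← ofReal_norm, ← ofReal_norm]
    apply ENNReal.ofReal_le_ofReal
    rw [Circle.norm_smul, norm_mul]
    exact mul_le_of_le_one_left (norm_nonneg _) (chi_le _)
  · have h0 : chi (R⁻¹ • ξ) = 0 := by
      apply chi.zero_of_le_dist
      rw [dist_zero_right, hn, ← div_eq_inv_mul, le_div_iff₀ hR]
      exact not_lt.1 h
    simp [h0]

lemma high_le {f : E 2 → ℂ} (hf : CC f) {R : ℝ} (hR : 0 < R) :
    ∫⁻ x, ‖f x - low f R x‖ₑ ^ 2 ≤ ∫⁻ ξ in {ξ | R ≤ ‖ξ‖}, ‖𝓕 f ξ‖ₑ ^ 2 := by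
  have hn : ∀ ξ : E 2, ‖R⁻¹ • ξ‖ = R⁻¹ * ‖ξ‖ := fun ξ => by
    rw [norm_smul, Real.norm_of_nonneg (by positivity)]
  have hG : CC (fun ξ => ((chi (R⁻¹ • ξ) : ℝ) : ℂ) * 𝓕 f ξ) := by
    constructor
    · refine ContDiff.mul ?_ ((𝓕 hf.S).smooth _)
      exact Complex.ofRealCLM.contDiff.comp (chi.contDiff.comp (contDiff_const_smul _))
    · refine HasCompactSupport.mul_right ?_
      have : HasCompactSupport (fun ξ : E 2 => chi (R⁻¹ • ξ)) :=
        chi.hasCompactSupport.comp_smul (by positivity)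
      exact this.comp_left (g := fun r : ℝ => (r : ℂ)) (by simp)
  have hlow : ∀ x, low f R x = (𝓕⁻ hG.S) x := by
    intro x
    rw [SchwartzMap.fourierInv_coe, Real.fourierInv_eq]
    rfl
  have hP := plancherel (hf.S - 𝓕⁻ hG.S)
  have e1 : ∫⁻ x, ‖f x - low f R x‖ₑ ^ 2 = ∫⁻ x, ‖(hf.S - 𝓕⁻ hG.S) x‖ₑ ^ 2 := by
    congr 1; ext x; rw [hlow]; rfl
  rw [e1, hP, ← lintegral_indicator (measurableSet_le (by fun_prop) (by fun_prop))]
  refine lintegral_mono fun ξ => ?_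
  have e2 : 𝓕 (⇑(hf.S - 𝓕⁻ hG.S)) ξ = 𝓕 f ξ - ((chi (R⁻¹ • ξ) : ℝ) : ℂ) * 𝓕 f ξ := by
    rw [← SchwartzMap.fourier_coe, sub_eq_add_neg, FourierTransform.fourier_add, FourierTransform.fourier_neg, FourierTransform.fourier_fourierInv_eq]
    rfl
  rw [e2]
  by_cases h : R ≤ ‖ξ‖
  · rw [indicator_of_mem (by exact h)]
    gcongr ?_ ^ 2
    rw [← ofReal_norm, ← ofReal_norm]
    apply ENNReal.ofReal_le_ofReal
    rw [show 𝓕 f ξ - ((chi (R⁻¹ • ξ) : ℝ) : ℂ) * 𝓕 f ξ = ((1 - chi (R⁻¹ • ξ) : ℝ) : ℂ) * 𝓕 f ξ by push_cast; ring,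
      norm_mul, Complex.norm_real, Real.norm_of_nonneg (by linarith [chi.le_one (x := R⁻¹ • ξ)])]
    exact mul_le_of_le_one_left (norm_nonneg _) (by linarith [chi.nonneg (x := R⁻¹ • ξ)])
  · have h1 : chi (R⁻¹ • ξ) = 1 := by
      apply chi.one_of_mem_closedBall
      rw [mem_closedBall_zero_iff, hn, ← div_eq_inv_mul, div_le_iff₀ hR]
      simpa [chi] using (not_le.1 h).le
    simp [h1]

lemma add_sq_le4 (a b : ℝ≥0∞) : (a + b) ^ 2 ≤ 4 * a ^ 2 + 4 * b ^ 2 := by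
  rcases le_total a b with h | h
  · calc (a + b) ^ 2 ≤ (b + b) ^ 2 := by gcongr
      _ = 4 * b ^ 2 := by ring
      _ ≤ _ := le_add_self
  · calc (a + b) ^ 2 ≤ (a + a) ^ 2 := by gcongr
      _ = 4 * a ^ 2 := by ring
      _ ≤ _ := le_self_add

lemma enorm_incr_sq_le {d : ℕ} {g : E d → ℂ} (hg : CC g) (e x : E d) {t : ℝ} (ht : 0 < t) :
    ‖g (x + t • e) - g x‖ₑ ^ 2 ≤ ENNReal.ofReal t * ∫⁻ s in Ioc 0 t, ‖fderiv ℝ g (x + s • e) e‖ₑ ^ 2 := by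
  have hc : Continuous fun s : ℝ => fderiv ℝ g (x + s • e) e := by
    have := hg.1.continuous_fderiv (by simp)
    fun_prop
  have e1 : ∫ s in (0:ℝ)..t, fderiv ℝ g (x + s • e) e = g (x + t • e) - g x := by
    have h2 : ∀ s ∈ uIcc 0 t, HasDerivAt (fun s : ℝ => g (x + s • e)) (fderiv ℝ g (x + s • e) e) s := by
      intro s _
      have hd : HasFDerivAt g (fderiv ℝ g (x + s • e)) (x + s • e) :=
        (hg.1.differentiable (by simp) _).hasFDerivAt
      have h3 : HasDerivAt (fun s : ℝ => x + s • e) e s := by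
        simpa using ((hasDerivAt_id s).smul_const e).const_add x
      exact hd.comp_hasDerivAt s h3
    rw [intervalIntegral.integral_eq_sub_of_hasDerivAt h2 (hc.intervalIntegrable _ _)]
    simp
  rw [← e1, intervalIntegral.integral_of_le ht.le]
  have h4 := cs_sq (volume.restrict (Ioc 0 t)) (f := fun _ => 1) (g := fun s => ‖fderiv ℝ g (x + s • e) e‖ₑ)
    (by fun_prop) hc.enorm.measurable.aemeasurable
  simp only [one_mul, one_pow, lintegral_const, Measure.restrict_apply_univ, Real.volume_Ioc, sub_zero] at h4
  refine le_trans ?_ h4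
  gcongr
  exact enorm_integral_le_lintegral_enorm _

lemma incr_l2 {d : ℕ} {g : E d → ℂ} (hg : CC g) (e : E d) {t : ℝ} (ht : 0 < t) :
    (∫⁻ x, ‖g (x + t • e) - g x‖ₑ ^ 2) * wt t ≤ ∫⁻ x, ‖fderiv ℝ g x e‖ₑ ^ 2 := by
  have hc := hg.1.continuous_fderiv (by simp)
  have h1 : ∫⁻ x, ‖g (x + t • e) - g x‖ₑ ^ 2 ≤ ENNReal.ofReal t * (ENNReal.ofReal t * ∫⁻ x, ‖fderiv ℝ g x e‖ₑ ^ 2) := by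
    refine (lintegral_mono fun x => enorm_incr_sq_le hg e x ht).trans ?_
    rw [lintegral_const_mul' _ _ ENNReal.ofReal_ne_top]
    gcongr
    rw [lintegral_lintegral_swap]
    · have : ∀ s : ℝ, ∫⁻ x, ‖fderiv ℝ g (x + s • e) e‖ₑ ^ 2 = ∫⁻ x, ‖fderiv ℝ g x e‖ₑ ^ 2 := fun s =>
        lintegral_add_right_eq_self (fun x => ‖fderiv ℝ g x e‖ₑ ^ 2) (s • e)
      simp_rw [this]
      rw [lintegral_const, Measure.restrict_apply_univ, Real.volume_Ioc, sub_zero, mul_comm]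
    · apply Measurable.aemeasurable
      refine Continuous.measurable ?_
      refine (ENNReal.continuous_pow 2).comp (Continuous.enorm ?_)
      fun_prop
  calc _ ≤ (ENNReal.ofReal t * (ENNReal.ofReal t * ∫⁻ x, ‖fderiv ℝ g x e‖ₑ ^ 2)) * wt t := by gcongr
    _ = (ENNReal.ofReal t * ENNReal.ofReal t * wt t) * ∫⁻ x, ‖fderiv ℝ g x e‖ₑ ^ 2 := by ring
    _ = _ := by
      unfold wt
      rw [← ENNReal.ofReal_mul ht.le, ← ENNReal.ofReal_mul (by positivity)]
      rw [show t * t * (t ^ 2)⁻¹ = 1 by field_simp]; simp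

lemma bilin {f g : E 2 → ℂ} (hf : CC f) (hg : CC g) (e : E 2) {B N : ℝ≥0∞} (hB : ∀ x, ‖g x‖ₑ ≤ B) (hBt : B ≠ ⊤)
    (hN : ∫⁻ x, ‖fderiv ℝ g x e‖ₑ ^ 2 ≤ N) (hNt : N ≠ ⊤) :
    ∫⁻ t in Ioi (0:ℝ), ∫⁻ x, ‖f x‖ₑ ^ 2 * ‖g (x + t • e) - g x‖ₑ ^ 2 * wt t ≤
      (16 * B ^ 2 + 16 * Cr * N) * HS f := by
  have hcF := hf.cont_fourier
  have hF : Measurable fun ξ => ‖𝓕 f ξ‖ₑ := hcF.enorm.measurable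
  have hcf := hf.1.continuous
  have hcg := hg.1.continuous
  have hml := measurable_low hf
  have hstep : ∀ t ∈ Ioi (0:ℝ), ∫⁻ x, ‖f x‖ₑ ^ 2 * ‖g (x + t • e) - g x‖ₑ ^ 2 * wt t ≤
      16 * B ^ 2 * ((∫⁻ ξ in {ξ | t⁻¹ ≤ ‖ξ‖}, ‖𝓕 f ξ‖ₑ ^ 2) * wt t) +
      4 * N * (∫⁻ ξ in Metric.ball 0 (2 * t⁻¹), ‖𝓕 f ξ‖ₑ) ^ 2 := by
    intro t ht
    have ht : 0 < t := ht
    have hti : 0 < t⁻¹ := by positivity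
    have hpt : ∀ x, ‖f x‖ₑ ^ 2 * ‖g (x + t • e) - g x‖ₑ ^ 2 * wt t ≤
       16 * B ^ 2 * wt t * ‖f x - low f t⁻¹ x‖ₑ ^ 2 +
        4 * (∫⁻ ξ in Metric.ball 0 (2 * t⁻¹), ‖𝓕 f ξ‖ₑ) ^ 2 * wt t * ‖g (x + t • e) - g x‖ₑ ^ 2 := by
      intro x
      have h1 : ‖f x‖ₑ ^ 2 ≤ 4 * ‖f x - low f t⁻¹ x‖ₑ ^ 2 + 4 * ‖low f t⁻¹ x‖ₑ ^ 2 := by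
        refine le_trans ?_ (add_sq_le4 _ _)
        gcongr
        calc ‖f x‖ₑ = ‖(f x - low f t⁻¹ x) + low f t⁻¹ x‖ₑ := by rw [sub_add_cancel]
          _ ≤ _ := enorm_add_le _ _
      have h2 : ‖g (x + t • e) - g x‖ₑ ^ 2 ≤ 4 * B ^ 2 := by
        calc _ ≤ (B + B) ^ 2 := by
              gcongr
              exact enorm_sub_le.trans (add_le_add (hB _) (hB _))
          _ = _ := by ring
      calc _ ≤ (4 * ‖f x - low f t⁻¹ x‖ₑ ^ 2 + 4 * ‖low f t⁻¹ x‖ₑ ^ 2) * ‖g (x + t • e) - g x‖ₑ ^ 2 * wt t := by gcongr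
        _ = 4 * ‖f x - low f t⁻¹ x‖ₑ ^ 2 * ‖g (x + t • e) - g x‖ₑ ^ 2 * wt t +
            4 * ‖low f t⁻¹ x‖ₑ ^ 2 * ‖g (x + t • e) - g x‖ₑ ^ 2 * wt t := by ring
        _ ≤ 4 * ‖f x - low f t⁻¹ x‖ₑ ^ 2 * (4 * B ^ 2) * wt t +
            4 * (∫⁻ ξ in Metric.ball 0 (2 * t⁻¹), ‖𝓕 f ξ‖ₑ) ^ 2 * ‖g (x + t • e) - g x‖ₑ ^ 2 * wt t := by
          gcongr
          exact low_le hti x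
        _ = _ := by ring
    refine (lintegral_mono hpt).trans ?_
    have hmg : Measurable fun x => ‖g (x + t • e) - g x‖ₑ ^ 2 := by
      refine Continuous.measurable ?_
      refine (ENNReal.continuous_pow 2).comp (Continuous.enorm ?_)
      fun_prop
    rw [lintegral_add_right _ (hmg.const_mul _), lintegral_const_mul' _ _ (by have := wt_ne_top t; finiteness),
      lintegral_const_mul _ hmg]
    refine add_le_add ?_ ?_
    · rw [mul_assoc _ (wt t), mul_comm (wt t)]
      gcongr 16 * B ^ 2 * (?_ * wt t)
      exact high_le hf hti
    · calc _ = 4 * ((∫⁻ x, ‖g (x + t • e) - g x‖ₑ ^ 2) * wt t) * (∫⁻ ξ in Metric.ball 0 (2 * t⁻¹), ‖𝓕 f ξ‖ₑ) ^ 2 := by ring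
        _ ≤ _ := by
          gcongr
          exact (incr_l2 hg e ht).trans hN
  refine (setLIntegral_mono' measurableSet_Ioi hstep).trans ?_
  have hm1 : Measurable fun t : ℝ => (∫⁻ ξ in {ξ : E 2 | t⁻¹ ≤ ‖ξ‖}, ‖𝓕 f ξ‖ₑ ^ 2) * wt t := by
    refine Measurable.mul ?_ measurable_wt
    have : ∀ t : ℝ, ∫⁻ ξ in {ξ : E 2 | t⁻¹ ≤ ‖ξ‖}, ‖𝓕 f ξ‖ₑ ^ 2 =
        ∫⁻ ξ, {p : ℝ × E 2 | p.1⁻¹ ≤ ‖p.2‖}.indicator (fun p => ‖𝓕 f p.2‖ₑ ^ 2) (t, ξ) := by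
      intro t
      rw [← lintegral_indicator (measurableSet_le (by fun_prop) (by fun_prop))]
      rfl
    simp_rw [this]
    refine Measurable.lintegral_prod_right' ?_
    exact Measurable.indicator ((hF.comp measurable_snd).pow_const 2) (measurableSet_le (by fun_prop) (by fun_prop))
  rw [lintegral_add_left (hm1.const_mul _), lintegral_const_mul _ hm1, lintegral_const_mul' _ _ (by finiteness), add_mul]
  refine add_le_add ?_ ?_
  · gcongr
    exact high_int hF
  · refine (mul_le_mul_right (low_hardy hF) _).trans (le_of_eq ?_)
    unfold HS; ring

lemma measurable_low_comp {f : E 2 → ℂ} (hf : CC f) {A : ℝ → ℝ} (hAm : Measurable A) :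
    Measurable fun p : E 2 × ℝ => low f (A p.2) p.1 := by
  have hml := measurable_low hf
  have hp : Measurable fun p : E 2 × ℝ => (A p.2, p.1) := (hAm.comp measurable_snd).prodMk measurable_fst
  generalize hL : low f = L at hml ⊢
  exact hml.comp hp

lemma measurable_aux {f : E 2 → ℂ} (hf : CC f) {A : ℝ → ℝ} (hAm : Measurable A) :
    Measurable fun p : E 2 × ℝ => ENNReal.ofReal p.2 * ‖f p.1 - low f (A p.2) p.1‖ₑ ^ 2 := by
  have hm3 := measurable_low_comp hf hAm
  have hcf := hf.1.continuous
  have h7 : Measurable fun p : E 2 × ℝ => ENNReal.ofReal p.2 := by fun_prop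
  have hm4 : Measurable fun p : E 2 × ℝ => f p.1 := (hcf.comp continuous_fst).measurable
  have hm5 : Measurable fun p : E 2 × ℝ => f p.1 - low f (A p.2) p.1 := hm4.sub hm3
  exact h7.mul (hm5.enorm.pow_const 2)

set_option maxHeartbeats 1000000 in
lemma sobolev_aux {f : E 2 → ℂ} (hf : CC f) {K c : ℝ} (hK : 0 < K) (hc : 0 < c) (hcr : Cr ≤ ENNReal.ofReal c)
    (hHK : HS f ≤ ENNReal.ofReal K) :
    ∫⁻ x, ‖f x‖ₑ ^ 4 ≤ ENNReal.ofReal (32 * c * K) * HS f := by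
  have hcF := hf.cont_fourier
  have hF : Measurable fun ξ => ‖𝓕 f ξ‖ₑ := hcF.enorm.measurable
  have hcf := hf.1.continuous
  have hml := measurable_low hf
  set A : ℝ → ℝ := fun l => l ^ 2 / (8 * c * K) with hA
  have hAm : Measurable A := by fun_prop
  have hm2 := measurable_aux hf hAm
  have hpt : ∀ x, ‖f x‖ₑ ^ 4 ≤ 8 * ∫⁻ l in Ioi (0:ℝ), ENNReal.ofReal l * ‖f x - low f (A l) x‖ₑ ^ 2 := by
    intro x
    have h1 : ∀ l ∈ Ioc 0 ‖f x‖, ‖f x‖ₑ ^ 2 ≤ 4 * ‖f x - low f (A l) x‖ₑ ^ 2 := by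
      intro l hl
      have hl0 : 0 < l := hl.1
      have hA0 : 0 < A l := by simp only [hA]; positivity
      have h2 : ‖low f (A l) x‖ₑ ^ 2 ≤ ENNReal.ofReal ((l/2) ^ 2) := by
        refine (pow_le_pow_left' (low_le hA0 x) 2).trans ?_
        refine (m_sq2 hF (by positivity)).trans ?_
        calc _ ≤ ENNReal.ofReal c * ENNReal.ofReal (2 * A l) * ENNReal.ofReal K := by
              gcongr
              exact hHK
          _ = _ := by
              rw [← ENNReal.ofReal_mul hc.le, ← ENNReal.ofReal_mul (by positivity)]
              congr 1; simp only [hA]; field_simp; norm_num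
      have h3 : ‖low f (A l) x‖ ≤ l / 2 := by
        rw [← ofReal_norm, ofReal_sq (norm_nonneg _), ENNReal.ofReal_le_ofReal_iff (by positivity)] at h2
        exact le_of_sq_le_sq h2 (by positivity)
      have h4 : ‖f x‖ ≤ 2 * ‖f x - low f (A l) x‖ := by
        have := norm_sub_norm_le (f x) (low f (A l) x)
        have := hl.2
        linarith
      rw [← ofReal_norm, ← ofReal_norm, ofReal_sq (norm_nonneg _), ofReal_sq (norm_nonneg _),
        ← ENNReal.ofReal_ofNat 4, ← ENNReal.ofReal_mul (by norm_num)]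
      apply ENNReal.ofReal_le_ofReal
      nlinarith [norm_nonneg (f x)]
    have h5 := lint_rpow_Ioc (a := 1) (t := ‖f x‖) (by norm_num) (norm_nonneg _)
    simp only [Real.rpow_one] at h5
    calc ‖f x‖ₑ ^ 4 = 2 * (∫⁻ l in Ioc 0 ‖f x‖, ENNReal.ofReal l) * ‖f x‖ₑ ^ 2 := by
          rw [h5, ← ENNReal.ofReal_ofNat 2, ← ENNReal.ofReal_mul (by norm_num),
            show 2 * (‖f x‖ ^ ((1:ℝ) + 1) / (1 + 1)) = ‖f x‖ ^ 2 by norm_num; ring, ← ofReal_sq (norm_nonneg _), ofReal_norm]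
          ring
      _ = 2 * ∫⁻ l in Ioc 0 ‖f x‖, ENNReal.ofReal l * ‖f x‖ₑ ^ 2 := by
          rw [lintegral_mul_const' _ _ (by finiteness), mul_assoc]
      _ ≤ 2 * ∫⁻ l in Ioc 0 ‖f x‖, 4 * (ENNReal.ofReal l * ‖f x - low f (A l) x‖ₑ ^ 2) := by
          gcongr 2 * ?_
          refine setLIntegral_mono' measurableSet_Ioc fun l hl => ?_
          calc _ ≤ ENNReal.ofReal l * (4 * ‖f x - low f (A l) x‖ₑ ^ 2) := by gcongr; exact h1 l hl
            _ = _ := by ring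
      _ = 8 * ∫⁻ l in Ioc 0 ‖f x‖, (ENNReal.ofReal l * ‖f x - low f (A l) x‖ₑ ^ 2) := by
          rw [lintegral_const_mul' _ _ (by norm_num)]; ring
      _ ≤ _ := by
          gcongr 8 * ?_
          exact lintegral_mono_set Ioc_subset_Ioi_self
  refine (lintegral_mono hpt).trans ?_
  rw [lintegral_const_mul' _ _ (by norm_num), lintegral_lintegral_swap hm2.aemeasurable]
  have h6 : ∀ l ∈ Ioi (0:ℝ), ∫⁻ x, ENNReal.ofReal l * ‖f x - low f (A l) x‖ₑ ^ 2 ≤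
      ∫⁻ ξ, {p : ℝ × E 2 | A p.1 ≤ ‖p.2‖}.indicator (fun p => ENNReal.ofReal p.1 * ‖𝓕 f p.2‖ₑ ^ 2) (l, ξ) := by
    intro l hl
    have hl : 0 < l := hl
    have hA0 : 0 < A l := by simp only [hA]; positivity
    rw [lintegral_const_mul' _ _ (by finiteness)]
    refine (mul_le_mul_right (high_le hf hA0) _).trans (le_of_eq ?_)
    rw [← lintegral_const_mul' _ _ (by finiteness), ← lintegral_indicator (measurableSet_le (by fun_prop) (by fun_prop))]
    rfl
  refine (mul_le_mul_right (setLIntegral_mono' measurableSet_Ioi h6) _).trans ?_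
  rw [lintegral_lintegral_swap]
  swap
  · apply Measurable.aemeasurable
    refine Measurable.indicator ?_ (measurableSet_le (by fun_prop) (by fun_prop))
    have h7 : Measurable fun p : ℝ × E 2 => ENNReal.ofReal p.1 := by fun_prop
    exact h7.mul ((hF.comp measurable_snd).pow_const 2)
  unfold HS
  rw [← lintegral_const_mul' _ _ (by norm_num), ← lintegral_const_mul' _ _ (by finiteness)]
  refine lintegral_mono fun ξ => ?_
  dsimp only
  calc _ ≤ 8 * ∫⁻ l in Ioc 0 (Real.sqrt (8 * c * K * ‖ξ‖)), ENNReal.ofReal (l ^ (1:ℝ)) * ‖𝓕 f ξ‖ₑ ^ 2 := by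
        gcongr 8 * ?_
        rw [← lintegral_indicator measurableSet_Ioi, ← lintegral_indicator measurableSet_Ioc]
        refine lintegral_mono fun t => ?_
        by_cases h0 : 0 < t
        · by_cases h1 : A t ≤ ‖ξ‖
          · have h2 : t ≤ Real.sqrt (8 * c * K * ‖ξ‖) := by
              apply Real.le_sqrt_of_sq_le
              simp only [hA] at h1
              rw [div_le_iff₀ (by positivity)] at h1
              linarith
            simp only [indicator, mem_Ioi, h0, mem_ofPred_eq, h1, if_true, mem_Ioc, h2, and_self, Real.rpow_one]
            exact le_rfl
          · simp [indicator, h1]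
        · simp [indicator, h0]
    _ = _ := by
        rw [lintegral_mul_const' _ _ (by finiteness), lint_rpow_Ioc (by norm_num) (by positivity), ← mul_assoc, ← mul_assoc]
        congr 1
        rw [show ((1:ℝ)+1) = 2 by norm_num, Real.rpow_two, Real.sq_sqrt (by positivity), ← ENNReal.ofReal_ofNat 8,
          ← ENNReal.ofReal_mul (by norm_num), ← ofReal_norm, ← ENNReal.ofReal_mul (by positivity)]
        congr 1; ring

def CS : ℝ≥0∞ := ENNReal.ofReal (32 * (Cr.toReal + 1))

lemma sobolev {f : E 2 → ℂ} (hf : CC f) : ∫⁻ x, ‖f x‖ₑ ^ 4 ≤ CS * HS f ^ 2 := by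
  have hc : 0 < Cr.toReal + 1 := by positivity
  have hcr : Cr ≤ ENNReal.ofReal (Cr.toReal + 1) := by
    rw [ENNReal.ofReal_add (by positivity) (by norm_num), ENNReal.ofReal_toReal Cr_ne_top]
    exact le_self_add
  by_cases h0 : HS f = 0
  · have := sobolev_aux hf (K := 1) one_pos hc hcr (by simp [h0])
    rw [h0, mul_zero] at this
    exact this.trans (zero_le)
  · have hK : 0 < (HS f).toReal := ENNReal.toReal_pos h0 (HS_ne_top hf)
    have := sobolev_aux hf hK hc hcr (by rw [ENNReal.ofReal_toReal (HS_ne_top hf)])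
    refine this.trans (le_of_eq ?_)
    rw [ENNReal.ofReal_mul (by positivity), ENNReal.ofReal_toReal (HS_ne_top hf)]
    unfold CS; ring

lemma prod_l2 {f g : E 2 → ℂ} (hf : CC f) (hg : CC g) :
    ∫⁻ x, ‖f x‖ₑ ^ 2 * ‖g x‖ₑ ^ 2 ≤ CS * (HS f * HS g) := by
  have h := cs_sq volume (f := fun x => ‖f x‖ₑ ^ 2) (g := fun x => ‖g x‖ₑ ^ 2)
    (((ENNReal.continuous_pow 2).comp hf.1.continuous.enorm).measurable.aemeasurable)
    (((ENNReal.continuous_pow 2).comp hg.1.continuous.enorm).measurable.aemeasurable)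
  simp only [← pow_mul] at h
  have h2 := h.trans (mul_le_mul' (sobolev hf) (sobolev hg))
  rw [show CS * HS f ^ 2 * (CS * HS g ^ 2) = (CS * (HS f * HS g)) ^ 2 by ring] at h2
  exact (ENNReal.pow_le_pow_left_iff (by norm_num)).1 h2


lemma emb_zero (xh : E 2) (t : ℝ) : emb xh t 0 = xh 0 := rfl
lemma emb_one (xh : E 2) (t : ℝ) : emb xh t 1 = xh 1 := rfl
lemma emb_two (xh : E 2) (t : ℝ) : emb xh t 2 = t := rfl

lemma emb_add_h (xh : E 2) (t s : ℝ) (j : Fin 2) :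
    emb (xh + s • bv j) t = emb xh t + s • bv j.castSucc := by
  ext i
  fin_cases j <;> fin_cases i <;> simp [emb, bv]

lemma emb_add_v (xh : E 2) (t s : ℝ) : emb xh (t + s) = emb xh t + s • bv 2 := by
  ext i
  fin_cases i <;> simp [emb, bv]

lemma contDiff_emb : ContDiff ℝ (⊤ : ℕ∞) (fun p : E 2 × ℝ => emb p.1 p.2) := by
  rw [contDiff_euclidean]
  intro i
  fin_cases i
  · change ContDiff ℝ (⊤ : ℕ∞) (fun p : E 2 × ℝ => p.1 0)
    fun_prop
  · change ContDiff ℝ (⊤ : ℕ∞) (fun p : E 2 × ℝ => p.1 1)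
    fun_prop
  · change ContDiff ℝ (⊤ : ℕ∞) (fun p : E 2 × ℝ => p.2)
    fun_prop

lemma continuous_emb : Continuous (fun p : E 2 × ℝ => emb p.1 p.2) := contDiff_emb.continuous

lemma mp_emb : MeasurePreserving (fun p : ℝ × E 2 => emb p.2 p.1) := by
  have h1 := (volume_preserving_piFinSuccAbove (fun _ : Fin 3 => ℝ) (Fin.last 2)).symm
  have h2 := PiLp.volume_preserving_toLp (Fin 3)
  have h3 := PiLp.volume_preserving_ofLp (Fin 2)
  have h4 := (MeasurePreserving.id (volume : Measure ℝ)).prod h3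
  have h5 := h2.comp (h1.comp h4)
  rw [← Measure.volume_eq_prod] at h5
  convert h5 using 1
  · ext p i
    fin_cases i <;> rfl

lemma lint_emb {G : E 3 → ℝ≥0∞} (hG : Measurable G) :
    ∫⁻ x, G x = ∫⁻ s : ℝ, ∫⁻ xh : E 2, G (emb xh s) := by
  rw [← mp_emb.lintegral_comp hG, Measure.volume_eq_prod, lintegral_prod]
  exact (hG.comp mp_emb.measurable).aemeasurable

def slice (f : E 3 → ℂ) (s : ℝ) : E 2 → ℂ := fun xh => f (emb xh s)

lemma CC.slice {f : E 3 → ℂ} (hf : CC f) (s : ℝ) : CC (slice f s) := by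
  constructor
  · exact hf.1.comp (contDiff_emb.comp (contDiff_id.prodMk contDiff_const))
  · have hli : Function.LeftInverse (fun x : E 3 => (!₂[x 0, x 1] : E 2)) (fun xh => emb xh s) := by
      intro xh
      ext i; fin_cases i <;> simp [emb]
    refine hf.2.comp_isClosedEmbedding (hli.isClosedEmbedding ?_ ?_)
    · fun_prop
    · exact continuous_emb.comp (f := fun xh : E 2 => (xh, s)) (by fun_prop)

lemma fderiv_slice {f : E 3 → ℂ} (hf : CC f) (s : ℝ) (xh : E 2) (j : Fin 2) :
    fderiv ℝ (slice f s) xh (bv j) = fderiv ℝ f (emb xh s) (bv j.castSucc) := by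
  have h1 : DifferentiableAt ℝ (slice f s) xh := (hf.slice s).1.differentiable (by simp) xh
  have h2 : DifferentiableAt ℝ f (emb xh s) := hf.1.differentiable (by simp) _
  rw [← h1.lineDeriv_eq_fderiv, ← h2.lineDeriv_eq_fderiv]
  unfold lineDeriv slice
  simp_rw [emb_add_h]

lemma CC.d3 {f : E 3 → ℂ} (hf : CC f) (e : E 3) : CC (fun x => fderiv ℝ f x e) := by
  constructor
  · have : ContDiff ℝ (⊤ : ℕ∞) (fderiv ℝ f) := hf.1.fderiv_right (by simp)
    exact this.clm_apply contDiff_const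
  · exact hf.2.fderiv_apply (𝕜 := ℝ) e

lemma meas_enorm_sq {α : Type*} [TopologicalSpace α] [MeasurableSpace α] [OpensMeasurableSpace α] {g : α → ℂ} (hg : Continuous g) :
    Measurable fun x => ‖g x‖ₑ ^ 2 :=
  ((ENNReal.continuous_pow 2).comp hg.enorm).measurable

lemma Qf_slice {f : E 3 → ℂ} (hf : CC f) (j : Fin 2) :
    Qf (bv j.castSucc) f = ∫⁻ s, Qf (bv j) (slice f s) := by
  unfold Qf
  have hc := hf.1.continuous
  rw [lint_emb]
  · simp only [slice, emb_add_h]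
  · refine Measurable.lintegral_prod_right' (f := fun p : E 3 × ℝ => ‖f (p.1 + p.2 • bv j.castSucc) - f p.1‖ₑ ^ 2 * wt p.2) ?_
    exact (meas_enorm_sq (by fun_prop)).mul (measurable_wt.comp measurable_snd)

lemma meas_Qf_slice {f : E 3 → ℂ} (hf : CC f) (j : Fin 2) :
    Measurable fun s => Qf (bv j) (slice f s) := by
  unfold Qf
  have hc := hf.1.continuous
  have he := continuous_emb
  refine Measurable.lintegral_prod_right' (f := fun p : ℝ × E 2 => ∫⁻ t in Ioi (0:ℝ), ‖slice f p.1 (p.2 + t • bv j) - slice f p.1 p.2‖ₑ ^ 2 * wt t) ?_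
  refine Measurable.lintegral_prod_right' (f := fun q : (ℝ × E 2) × ℝ => ‖slice f q.1.1 (q.1.2 + q.2 • bv j) - slice f q.1.1 q.1.2‖ₑ ^ 2 * wt q.2) ?_
  refine (meas_enorm_sq ?_).mul (measurable_wt.comp measurable_snd)
  unfold slice
  refine Continuous.sub (hc.comp ?_) (hc.comp ?_)
  · exact he.comp (f := fun q : (ℝ × E 2) × ℝ => (q.1.2 + q.2 • bv j, q.1.1)) (by fun_prop)
  · exact he.comp (f := fun q : (ℝ × E 2) × ℝ => (q.1.2, q.1.1)) (by fun_prop)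

lemma kap_cancel {x y : ℝ≥0∞} (h : kap * x ≤ kap * y) : x ≤ y :=
  (ENNReal.mul_le_mul_iff_right kap_ne_zero kap_ne_top).1 h

lemma slice_HS {f : E 3 → ℂ} (hf : CC f) : ∫⁻ s, HS (slice f s) ≤ 2 * HS f := by
  apply kap_cancel
  rw [← lintegral_const_mul' _ _ kap_ne_top]
  calc _ ≤ ∫⁻ s, (Qf (bv 0) (slice f s) + Qf (bv 1) (slice f s)) := by
        refine lintegral_mono fun s => ?_
        have := HS_le_Qf (hf.slice s)
        rwa [Fin.sum_univ_two] at this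
    _ = Qf (bv (Fin.castSucc (0 : Fin 2))) f + Qf (bv (Fin.castSucc (1 : Fin 2))) f := by
        rw [lintegral_add_left (meas_Qf_slice hf 0), Qf_slice hf, Qf_slice hf]
    _ ≤ kap * HS f + kap * HS f := add_le_add (Qf_le_HS hf _) (Qf_le_HS hf _)
    _ = _ := by ring

/-- the remainder term -/
def Rf (a b : E 3 → ℂ) (e : E 3) : ℝ≥0∞ :=
  ∫⁻ x, ∫⁻ t in Ioi (0:ℝ), ‖a x‖ₑ ^ 2 * ‖b (x + t • e) - b x‖ₑ ^ 2 * wt t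

lemma mul_incr_le (a a' b b' : ℂ) {B : ℝ≥0∞} (hB : ‖b'‖ₑ ≤ B) (w : ℝ≥0∞) :
    ‖a' * b' - a * b‖ₑ ^ 2 * w ≤ 4 * B ^ 2 * (‖a' - a‖ₑ ^ 2 * w) + 4 * (‖a‖ₑ ^ 2 * ‖b' - b‖ₑ ^ 2 * w) := by
  have h1 : a' * b' - a * b = b' * (a' - a) + a * (b' - b) := by ring
  rw [h1]
  calc _ ≤ (‖b'‖ₑ * ‖a' - a‖ₑ + ‖a‖ₑ * ‖b' - b‖ₑ) ^ 2 * w := by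
        gcongr
        refine (enorm_add_le _ _).trans (le_of_eq ?_)
        rw [enorm_mul, enorm_mul]
    _ ≤ (B * ‖a' - a‖ₑ + ‖a‖ₑ * ‖b' - b‖ₑ) ^ 2 * w := by
        gcongr
    _ ≤ (4 * (B * ‖a' - a‖ₑ) ^ 2 + 4 * (‖a‖ₑ * ‖b' - b‖ₑ) ^ 2) * w := by
        gcongr; exact add_sq_le4 _ _
    _ = _ := by ring

lemma lint_two {α : Type*} [MeasurableSpace α] {β : Type*} [MeasurableSpace β] {μ : Measure α} {ν : Measure β} [SFinite ν]
    {F G H : α → β → ℝ≥0∞} (hG : Measurable (Function.uncurry G)) {c d : ℝ≥0∞} (hc : c ≠ ⊤) (hd : d ≠ ⊤)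
    (h : ∀ x y, F x y ≤ c * G x y + d * H x y) :
    ∫⁻ x, ∫⁻ y, F x y ∂ν ∂μ ≤ c * (∫⁻ x, ∫⁻ y, G x y ∂ν ∂μ) + d * ∫⁻ x, ∫⁻ y, H x y ∂ν ∂μ := by
  have h1 : ∀ x, ∫⁻ y, F x y ∂ν ≤ c * (∫⁻ y, G x y ∂ν) + d * ∫⁻ y, H x y ∂ν := by
    intro x
    refine (lintegral_mono (h x)).trans ?_
    have hx : Measurable (G x) := hG.comp measurable_prodMk_left
    rw [lintegral_add_left (hx.const_mul _), lintegral_const_mul' _ _ hc, lintegral_const_mul' _ _ hd]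
  refine (lintegral_mono h1).trans ?_
  have hG2 : Measurable fun x => ∫⁻ y, G x y ∂ν := hG.lintegral_prod_right'
  rw [lintegral_add_left (hG2.const_mul _), lintegral_const_mul' _ _ hc, lintegral_const_mul' _ _ hd]

lemma Qf_mul_le {a b : E 3 → ℂ} (ha : CC a) (e : E 3) {B : ℝ≥0∞} (hB : ∀ x, ‖b x‖ₑ ≤ B) (hBt : B ≠ ⊤) :
    Qf e (fun x => a x * b x) ≤ 4 * B ^ 2 * Qf e a + 4 * Rf a b e := by
  have hca := ha.1.continuous
  have hm : Measurable fun p : E 3 × ℝ => ‖a (p.1 + p.2 • e) - a p.1‖ₑ ^ 2 * wt p.2 :=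
    (meas_enorm_sq (by fun_prop)).mul (measurable_wt.comp measurable_snd)
  unfold Qf Rf
  exact lint_two (F := fun x t => ‖a (x + t • e) * b (x + t • e) - a x * b x‖ₑ ^ 2 * wt t)
    (G := fun x t => ‖a (x + t • e) - a x‖ₑ ^ 2 * wt t)
    (H := fun x t => ‖a x‖ₑ ^ 2 * ‖b (x + t • e) - b x‖ₑ ^ 2 * wt t) hm (by finiteness) (by finiteness)
    (fun x t => mul_incr_le _ _ _ _ (hB _) _)

lemma Rf_eq {a b : E 3 → ℂ} (ha : CC a) (hb : CC b) (e : E 3) :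
    Rf a b e = ∫⁻ s, ∫⁻ t in Ioi (0:ℝ), ∫⁻ xh, ‖a (emb xh s)‖ₑ ^ 2 * ‖b (emb xh s + t • e) - b (emb xh s)‖ₑ ^ 2 * wt t := by
  have hca := ha.1.continuous
  have hcb := hb.1.continuous
  have he := continuous_emb
  unfold Rf
  have hm : Measurable fun p : E 3 × ℝ => ‖a p.1‖ₑ ^ 2 * ‖b (p.1 + p.2 • e) - b p.1‖ₑ ^ 2 * wt p.2 :=
    ((meas_enorm_sq (g := fun p : E 3 × ℝ => a p.1) (by fun_prop)).mul (meas_enorm_sq (by fun_prop))).mul (measurable_wt.comp measurable_snd)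
  rw [lint_emb hm.lintegral_prod_right']
  congr 1; ext s
  rw [lintegral_lintegral_swap]
  have h2 : Measurable fun q : E 2 × ℝ => (emb q.1 s, q.2) :=
    ((he.comp (f := fun q : E 2 × ℝ => (q.1, s)) (by fun_prop)).prodMk continuous_snd).measurable
  exact (hm.comp h2).aemeasurable

lemma Rf_h {a b : E 3 → ℂ} (ha : CC a) (hb : CC b) (j : Fin 2) {B N : ℝ≥0∞} (hB : ∀ x, ‖b x‖ₑ ≤ B) (hBt : B ≠ ⊤)
    (hN : ∀ s, ∫⁻ xh, ‖fderiv ℝ b (emb xh s) (bv j.castSucc)‖ₑ ^ 2 ≤ N) (hNt : N ≠ ⊤) :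
    Rf a b (bv j.castSucc) ≤ (32 * B ^ 2 + 32 * Cr * N) * HS a := by
  rw [Rf_eq ha hb]
  have h1 : ∀ s, ∫⁻ t in Ioi (0:ℝ), ∫⁻ xh, ‖a (emb xh s)‖ₑ ^ 2 * ‖b (emb xh s + t • bv j.castSucc) - b (emb xh s)‖ₑ ^ 2 * wt t
      ≤ (16 * B ^ 2 + 16 * Cr * N) * HS (slice a s) := by
    intro s
    have := bilin (ha.slice s) (hb.slice s) (bv j) (B := B) (N := N) (fun x => hB _) hBt
      (by simp_rw [fderiv_slice hb]; exact hN s) hNt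
    simpa only [slice, emb_add_h] using this
  refine (lintegral_mono h1).trans ?_
  have := Cr_ne_top
  rw [lintegral_const_mul' _ _ (by finiteness)]
  refine (mul_le_mul_right (slice_HS ha) _).trans (le_of_eq ?_)
  ring

set_option maxHeartbeats 1000000 in
lemma vert {b : E 3 → ℂ} (hb : CC b) (s : ℝ) (j : Fin 2) :
    ∫⁻ t in Ioi (0:ℝ), Qf (bv j) (fun xh => slice b (s + t) xh - slice b s xh) * wt t ≤
      4 * ∫⁻ r, Qf (bv j) (slice (fun x => fderiv ℝ b x (bv 2)) r) := by
  have hcb := hb.1.continuous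
  have hcd := (hb.d3 (bv 2)).1.continuous
  have he := continuous_emb
  have hw := measurable_wt
  have hwt := wt_ne_top
  have hce : ∀ {α : Type} [TopologicalSpace α] {u : α → E 2} {v : α → ℝ}, Continuous u → Continuous v →
      Continuous fun x => b (emb (u x) (v x)) := fun hu hv => hcb.comp (he.comp (hu.prodMk hv))
  have hcde : ∀ {α : Type} [TopologicalSpace α] {u : α → E 2} {v : α → ℝ}, Continuous u → Continuous v →
      Continuous fun x => fderiv ℝ b (emb (u x) (v x)) (bv 2) := fun hu hv => hcd.comp (he.comp (hu.prodMk hv))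
  unfold Qf slice
  have e1 : ∀ t : ℝ, (∫⁻ x : E 2, ∫⁻ r in Ioi (0:ℝ), ‖(b (emb (x + r • bv j) (s + t)) - b (emb (x + r • bv j) s)) -
        (b (emb x (s + t)) - b (emb x s))‖ₑ ^ 2 * wt r) * wt t =
      ∫⁻ x : E 2, ∫⁻ r in Ioi (0:ℝ), ‖(b (emb (x + r • bv j) (s + t)) - b (emb (x + r • bv j) s)) -
        (b (emb x (s + t)) - b (emb x s))‖ₑ ^ 2 * wt r * wt t := by
    intro t
    rw [← lintegral_mul_const' _ _ (hwt t)]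
    congr 1; ext x
    rw [← lintegral_mul_const' _ _ (hwt t)]
  simp_rw [e1]
  have hM : Measurable fun q : (ℝ × E 2) × ℝ => ‖(b (emb (q.1.2 + q.2 • bv j) (s + q.1.1)) - b (emb (q.1.2 + q.2 • bv j) s)) -
        (b (emb q.1.2 (s + q.1.1)) - b (emb q.1.2 s))‖ₑ ^ 2 * wt q.2 * wt q.1.1 := by
    refine ((meas_enorm_sq ?_).mul (by fun_prop)).mul (by fun_prop)
    refine Continuous.sub (Continuous.sub ?_ ?_) (Continuous.sub ?_ ?_) <;> exact hce (by fun_prop) (by fun_prop)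
  have hM2 : Measurable fun q : (ℝ × E 2) × ℝ => ‖fderiv ℝ b (emb (q.1.2 + q.2 • bv j) q.1.1) (bv 2) - fderiv ℝ b (emb q.1.2 q.1.1) (bv 2)‖ₑ ^ 2 * wt q.2 := by
    refine (meas_enorm_sq ?_).mul (by fun_prop)
    refine Continuous.sub ?_ ?_ <;> exact hcde (by fun_prop) (by fun_prop)
  rw [lintegral_lintegral_swap hM.lintegral_prod_right'.aemeasurable,
    lintegral_lintegral_swap (μ := (volume : Measure ℝ)) (f := fun (q : ℝ) (x : E 2) => ∫⁻ r in Ioi (0:ℝ), ‖fderiv ℝ b (emb (x + r • bv j) q) (bv 2) - fderiv ℝ b (emb x q) (bv 2)‖ₑ ^ 2 * wt r)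
      hM2.lintegral_prod_right'.aemeasurable, ← lintegral_const_mul' _ _ (by norm_num)]
  refine lintegral_mono fun x => ?_
  dsimp only
  have hsw : Measurable fun p : ℝ × ℝ => ((p.1, x), p.2) := by fun_prop
  have hA := (hM.comp hsw).aemeasurable (μ := (volume.restrict (Ioi (0:ℝ))).prod (volume.restrict (Ioi (0:ℝ))))
  have hB := (hM2.comp hsw).aemeasurable (μ := (volume : Measure ℝ).prod (volume.restrict (Ioi (0:ℝ))))
  rw [lintegral_lintegral_swap (μ := volume.restrict (Ioi (0:ℝ))) (f := fun (t : ℝ) (r : ℝ) => ‖(b (emb (x + r • bv j) (s + t)) - b (emb (x + r • bv j) s)) -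
        (b (emb x (s + t)) - b (emb x s))‖ₑ ^ 2 * wt r * wt t) hA, lintegral_lintegral_swap (μ := (volume : Measure ℝ)) (f := fun (q : ℝ) (r : ℝ) => ‖fderiv ℝ b (emb (x + r • bv j) q) (bv 2) - fderiv ℝ b (emb x q) (bv 2)‖ₑ ^ 2 * wt r) hB, ← lintegral_const_mul' _ _ (by norm_num)]
  refine lintegral_mono fun r => ?_
  dsimp only
  have hder : ∀ y : E 2, ∀ t : ℝ, HasDerivAt (fun t => b (emb y t)) (fderiv ℝ b (emb y t) (bv 2)) t := by
    intro y t
    have hd : HasFDerivAt b (fderiv ℝ b (emb y t)) (emb y t) := (hb.1.differentiable (by simp) _).hasFDerivAt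
    have h3 : HasDerivAt (fun t : ℝ => emb y t) (bv 2) t := by
      have : (fun t : ℝ => emb y t) = fun t : ℝ => emb y 0 + t • bv 2 := by
        ext1 t; rw [← emb_add_v, zero_add]
      rw [this]
      simpa using ((hasDerivAt_id t).smul_const (bv 2 : E 3)).const_add (emb y 0)
    exact hd.comp_hasDerivAt t h3
  have hh := hardy_incr (g := fun t => b (emb (x + r • bv j) t) - b (emb x t))
    (g' := fun t => fderiv ℝ b (emb (x + r • bv j) t) (bv 2) - fderiv ℝ b (emb x t) (bv 2))
    (fun t => (hder _ t).sub (hder _ t))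
    (Continuous.sub (hcde (by fun_prop) (by fun_prop)) (hcde (by fun_prop) (by fun_prop))) s
  rw [lintegral_mul_const' _ _ (hwt r), ← mul_assoc]
  refine le_trans (le_of_eq ?_) (mul_le_mul_left hh (wt r))
  rw [← lintegral_mul_const' _ _ (hwt r)]
  congr 1; ext t
  rw [show ∀ A B C D : ℂ, A - B - (C - D) = A - C - (B - D) from fun A B C D => by ring]
  ring

lemma vertHS {b : E 3 → ℂ} (hb : CC b) (s : ℝ) :
    ∫⁻ t in Ioi (0:ℝ), HS (fun xh => slice b (s + t) xh - slice b s xh) * wt t ≤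
      8 * ∫⁻ r, HS (slice (fun x => fderiv ℝ b x (bv 2)) r) := by
  have hcb := hb.1.continuous
  have he := continuous_emb
  have hw := measurable_wt
  apply kap_cancel
  rw [← lintegral_const_mul' _ _ kap_ne_top]
  have hm : Measurable fun t : ℝ => Qf (bv 0) (fun xh => slice b (s + t) xh - slice b s xh) * wt t := by
    refine Measurable.mul ?_ hw
    unfold Qf slice
    refine Measurable.lintegral_prod_right' (f := fun p : ℝ × E 2 => ∫⁻ r in Ioi (0:ℝ), ‖(b (emb (p.2 + r • bv 0) (s + p.1)) - b (emb (p.2 + r • bv 0) s)) -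
        (b (emb p.2 (s + p.1)) - b (emb p.2 s))‖ₑ ^ 2 * wt r) ?_
    refine Measurable.lintegral_prod_right' (f := fun q : (ℝ × E 2) × ℝ => ‖(b (emb (q.1.2 + q.2 • bv 0) (s + q.1.1)) - b (emb (q.1.2 + q.2 • bv 0) s)) -
        (b (emb q.1.2 (s + q.1.1)) - b (emb q.1.2 s))‖ₑ ^ 2 * wt q.2) ?_
    have hce : ∀ {α : Type} [TopologicalSpace α] {u : α → E 2} {v : α → ℝ}, Continuous u → Continuous v →
      Continuous fun x => b (emb (u x) (v x)) := fun hu hv => hcb.comp (he.comp (hu.prodMk hv))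
    refine (meas_enorm_sq ?_).mul (by fun_prop)
    refine Continuous.sub (Continuous.sub ?_ ?_) (Continuous.sub ?_ ?_) <;> exact hce (by fun_prop) (by fun_prop)
  have hQ : ∀ j : Fin 2, ∫⁻ r, Qf (bv j) (slice (fun x => fderiv ℝ b x (bv 2)) r) ≤
      kap * ∫⁻ r, HS (slice (fun x => fderiv ℝ b x (bv 2)) r) := by
    intro j
    rw [← lintegral_const_mul' _ _ kap_ne_top]
    exact lintegral_mono fun r => Qf_le_HS ((hb.d3 (bv 2)).slice r) j
  calc _ ≤ ∫⁻ t in Ioi (0:ℝ), (Qf (bv 0) (fun xh => slice b (s + t) xh - slice b s xh) * wt t +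
          Qf (bv 1) (fun xh => slice b (s + t) xh - slice b s xh) * wt t) := by
        refine lintegral_mono fun t => ?_
        dsimp only
        rw [← mul_assoc, ← add_mul]
        have := HS_le_Qf ((hb.slice (s + t)).sub (hb.slice s))
        rw [Fin.sum_univ_two] at this
        gcongr
    _ ≤ 4 * (kap * ∫⁻ r, HS (slice (fun x => fderiv ℝ b x (bv 2)) r)) + 4 * (kap * ∫⁻ r, HS (slice (fun x => fderiv ℝ b x (bv 2)) r)) := by
        rw [lintegral_add_left hm]
        refine add_le_add ((vert hb s 0).trans ?_) ((vert hb s 1).trans ?_)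
        · gcongr; exact hQ 0
        · gcongr; exact hQ 1
    _ = _ := by ring

lemma CS_ne_top : CS ≠ ⊤ := ENNReal.ofReal_ne_top

lemma Rf_v {a b : E 3 → ℂ} (ha : CC a) (hb : CC b) :
    Rf a b (bv 2) ≤ 16 * CS * (∫⁻ r, HS (slice (fun x => fderiv ℝ b x (bv 2)) r)) * HS a := by
  rw [Rf_eq ha hb]
  set P := ∫⁻ r, HS (slice (fun x => fderiv ℝ b x (bv 2)) r) with hP
  have hPt : P ≠ ⊤ := by
    have h1 := slice_HS (hb.d3 (bv 2))
    have h2 := HS_ne_top (hb.d3 (bv 2))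
    exact ne_top_of_le_ne_top (by finiteness) h1
  have hCS := CS_ne_top
  have h1 : ∀ s, ∫⁻ t in Ioi (0:ℝ), ∫⁻ xh, ‖a (emb xh s)‖ₑ ^ 2 * ‖b (emb xh s + t • bv 2) - b (emb xh s)‖ₑ ^ 2 * wt t
      ≤ (8 * CS * P) * HS (slice a s) := by
    intro s
    have hHt := HS_ne_top (ha.slice s)
    calc _ ≤ ∫⁻ t in Ioi (0:ℝ), CS * HS (slice a s) * (HS (fun xh => slice b (s + t) xh - slice b s xh) * wt t) := by
          refine lintegral_mono fun t => ?_
          dsimp only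
          rw [lintegral_mul_const' _ _ (wt_ne_top t), ← mul_assoc]
          gcongr
          have := prod_l2 (ha.slice s) ((hb.slice (s + t)).sub (hb.slice s))
          rw [mul_assoc]
          simpa only [slice, emb_add_v] using this
      _ ≤ CS * HS (slice a s) * (8 * P) := by
          rw [lintegral_const_mul' _ _ (by finiteness)]
          gcongr
          exact vertHS hb s
      _ = _ := by ring
  refine (lintegral_mono h1).trans ?_
  rw [lintegral_const_mul' _ _ (by finiteness)]
  refine (mul_le_mul_right (slice_HS ha) _).trans (le_of_eq ?_)
  ring

def Mc : ℝ≥0∞ := 12 + kap⁻¹ * (256 + 256 * Cr + 64 * CS)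

lemma Mc_ne_top : Mc ≠ ⊤ := by
  have h1 := Cr_ne_top
  have h2 := CS_ne_top
  have h3 : kap⁻¹ ≠ ⊤ := ENNReal.inv_ne_top.2 kap_ne_zero
  unfold Mc
  finiteness

lemma main {a b : E 3 → ℂ} (ha : CC a) (hb : CC b) {B N : ℝ≥0∞} (hB : ∀ x, ‖b x‖ₑ ≤ B) (hBt : B ≠ ⊤)
    (hN : ∀ j : Fin 2, ∀ s, ∫⁻ xh, ‖fderiv ℝ b (emb xh s) (bv j.castSucc)‖ₑ ^ 2 ≤ N) (hNt : N ≠ ⊤) :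
    HS (fun x => a x * b x) ≤ Mc * (B ^ 2 + N + ∫⁻ r, HS (slice (fun x => fderiv ℝ b x (bv 2)) r)) * HS a := by
  set P := ∫⁻ r, HS (slice (fun x => fderiv ℝ b x (bv 2)) r) with hP
  apply kap_cancel
  refine (HS_le_Qf (ha.mul hb)).trans ?_
  rw [Fin.sum_univ_three]
  have q := fun e => Qf_mul_le ha e hB hBt
  have r0 := Rf_h ha hb 0 hB hBt (hN 0) hNt
  have r1 := Rf_h ha hb 1 hB hBt (hN 1) hNt
  have r2 := Rf_v ha hb
  have e0 : (bv (Fin.castSucc (0 : Fin 2)) : E 3) = bv 0 := rfl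
  have e1 : (bv (Fin.castSucc (1 : Fin 2)) : E 3) = bv 1 := rfl
  rw [e0] at r0
  rw [e1] at r1
  rw [← hP] at r2
  have hk : kap * kap⁻¹ = 1 := ENNReal.mul_inv_cancel kap_ne_zero kap_ne_top
  calc _ ≤ (4 * B ^ 2 * (kap * HS a) + 4 * ((32 * B ^ 2 + 32 * Cr * N) * HS a)) +
        (4 * B ^ 2 * (kap * HS a) + 4 * ((32 * B ^ 2 + 32 * Cr * N) * HS a)) +
        (4 * B ^ 2 * (kap * HS a) + 4 * (16 * CS * P * HS a)) := by
        refine add_le_add (add_le_add ((q _).trans ?_) ((q _).trans ?_)) ((q _).trans ?_)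
        all_goals gcongr
        all_goals exact Qf_le_HS ha _
    _ = (kap * 12 * B ^ 2 + (256 * B ^ 2 + 256 * Cr * N + 64 * CS * P)) * HS a := by ring
    _ ≤ (kap * 12 * (B ^ 2 + N + P) + (256 * (B ^ 2 + N + P) + 256 * Cr * (B ^ 2 + N + P) + 64 * CS * (B ^ 2 + N + P))) * HS a := by
        have i1 : B ^ 2 ≤ B ^ 2 + N + P := by rw [add_assoc]; exact le_self_add
        have i2 : N ≤ B ^ 2 + N + P := le_add_right le_add_self
        have i3 : P ≤ B ^ 2 + N + P := le_add_self
        gcongr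
    _ = (kap * 12 + 1 * (256 + 256 * Cr + 64 * CS)) * (B ^ 2 + N + P) * HS a := by ring
    _ = _ := by rw [← hk]; unfold Mc; ring


lemma hNorm_eq {d : ℕ} {f : E d → ℂ} (hf : CC f) : hNorm d (1/2) f = (HS f).toReal ^ (1/2 : ℝ) := by
  unfold hNorm HS
  congr 1
  have hc := hf.cont_fourier
  have hcc : Continuous fun ξ : E d => ‖ξ‖ ^ (2 * (1/2:ℝ)) * ‖𝓕 f ξ‖ ^ 2 := by
    norm_num
    fun_prop
  rw [integral_eq_lintegral_of_nonneg_ae (Filter.Eventually.of_forall fun ξ => by positivity) hcc.aestronglyMeasurable]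
  congr 2; ext ξ
  rw [show (2 * (1/2:ℝ)) = 1 by norm_num, Real.rpow_one, ENNReal.ofReal_mul (norm_nonneg _), ofReal_norm,
    ENNReal.ofReal_pow (norm_nonneg _), ofReal_norm]

lemma hNorm_sq {d : ℕ} {f : E d → ℂ} (hf : CC f) : hNorm d (1/2) f ^ 2 = (HS f).toReal := by
  rw [hNorm_eq hf, ← Real.rpow_natCast, ← Real.rpow_mul ENNReal.toReal_nonneg]
  norm_num

lemma hNorm_nonneg {d : ℕ} {f : E d → ℂ} (hf : CC f) : 0 ≤ hNorm d (1/2) f := by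
  rw [hNorm_eq hf]; positivity

lemma measurable_HS_slice {f : E 3 → ℂ} (hf : CC f) : Measurable fun s => HS (slice f s) := by
  have hc := hf.1.continuous
  have he := continuous_emb
  unfold HS
  refine Measurable.lintegral_prod_right' (f := fun p : ℝ × E 2 => ‖p.2‖ₑ * ‖𝓕 (slice f p.1) p.2‖ₑ ^ 2) ?_
  have h1 : Measurable fun p : ℝ × E 2 => 𝓕 (slice f p.1) p.2 := by
    simp only [Real.fourier_eq]
    refine StronglyMeasurable.measurable ?_
    refine StronglyMeasurable.integral_prod_right (f := fun (p : ℝ × E 2) (x : E 2) => 𝐞 (-(inner ℝ x p.2)) • slice f p.1 x) ?_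
    apply Continuous.stronglyMeasurable
    simp only [Function.uncurry_def, Circle.smul_def, smul_eq_mul]
    have hcc := Real.continuous_fourierChar
    refine Continuous.mul ?_ ?_
    · refine continuous_subtype_val.comp (hcc.comp ?_)
      fun_prop
    · exact hc.comp (he.comp (f := fun q : (ℝ × E 2) × E 2 => (q.2, q.1.1)) (by fun_prop))
  have h2 : Measurable fun p : ℝ × E 2 => ‖p.2‖ₑ := by fun_prop
  exact h2.mul (h1.enorm.pow_const 2)

lemma T_eq {f : E 3 → ℂ} (hf : CC f) :
    ∫⁻ s, HS (slice f s) = ENNReal.ofReal (∫ s, hNorm 2 (1/2) (slice f s) ^ 2) := by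
  have h1 := slice_HS hf
  have h2 := HS_ne_top hf
  have h3 : ∫⁻ s, HS (slice f s) ≠ ⊤ := ne_top_of_le_ne_top (by finiteness) h1
  simp_rw [hNorm_sq (hf.slice _)]
  rw [integral_toReal (measurable_HS_slice hf).aemeasurable, ENNReal.ofReal_toReal h3]
  exact Filter.Eventually.of_forall fun s => (HS_ne_top (hf.slice s)).lt_top

lemma bdd_b {b : E 3 → ℂ} (hb : CC b) : BddAbove (range fun x => ‖b x‖) := by
  obtain ⟨C, hC⟩ := hb.1.continuous.bounded_above_of_compact_support hb.2
  exact ⟨C, by rintro _ ⟨x, rfl⟩; exact hC x⟩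

lemma norm_le_emb (xh : E 2) (s : ℝ) : ‖xh‖ ≤ ‖emb xh s‖ := by
  rw [EuclideanSpace.norm_eq, EuclideanSpace.norm_eq]
  apply Real.sqrt_le_sqrt
  rw [Fin.sum_univ_two, Fin.sum_univ_three, emb_zero, emb_one]
  have := sq_nonneg ‖emb xh s 2‖
  linarith

lemma slice_l2 {g : E 3 → ℂ} (hg : CC g) : ∃ K : ℝ≥0∞, K ≠ ⊤ ∧ ∀ s, ∫⁻ xh, ‖slice g s xh‖ₑ ^ 2 ≤ K := by
  obtain ⟨C, hC⟩ := hg.1.continuous.bounded_above_of_compact_support hg.2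
  obtain ⟨R, hR⟩ := hg.2.isBounded.subset_closedBall (0 : E 3)
  refine ⟨ENNReal.ofReal C ^ 2 * volume (Metric.closedBall (0 : E 2) R), ?_, fun s => ?_⟩
  · have : volume (Metric.closedBall (0 : E 2) R) ≠ ⊤ := measure_closedBall_lt_top.ne
    finiteness
  · rw [← lintegral_indicator_const Metric.isClosed_closedBall.measurableSet]
    refine lintegral_mono fun xh => ?_
    by_cases h : xh ∈ Metric.closedBall (0 : E 2) R
    · rw [indicator_of_mem h]
      gcongr
      rw [← ofReal_norm]
      exact ENNReal.ofReal_le_ofReal (hC _)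
    · have : slice g s xh = 0 := by
        by_contra h0
        apply h
        have h1 := hR (subset_tsupport _ (Function.mem_support.2 h0))
        rw [mem_closedBall_zero_iff] at h1 ⊢
        exact (norm_le_emb xh s).trans h1
      simp [this]

/-- squared horizontal gradient on a slice -/
def gI (b : E 3 → ℂ) (s : ℝ) : ℝ :=
  ∫ xh : E 2, (‖fderiv ℝ b (emb xh s) (EuclideanSpace.single 0 1)‖ ^ 2
               + ‖fderiv ℝ b (emb xh s) (EuclideanSpace.single 1 1)‖ ^ 2)

lemma gI_nonneg (b : E 3 → ℂ) (s : ℝ) : 0 ≤ gI b s := integral_nonneg fun _ => by positivity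

lemma gI_eq {b : E 3 → ℂ} (hb : CC b) (s : ℝ) :
    ENNReal.ofReal (gI b s) = (∫⁻ xh, ‖slice (fun x => fderiv ℝ b x (bv 0)) s xh‖ₑ ^ 2) +
      ∫⁻ xh, ‖slice (fun x => fderiv ℝ b x (bv 1)) s xh‖ₑ ^ 2 := by
  have c0 := ((hb.d3 (bv 0)).slice s)
  have c1 := ((hb.d3 (bv 1)).slice s)
  have i0 : Integrable fun xh => ‖slice (fun x => fderiv ℝ b x (bv 0)) s xh‖ ^ 2 :=
    Continuous.integrable_of_hasCompactSupport (by have := c0.1.continuous; fun_prop)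
      (c0.2.comp_left (g := fun z : ℂ => ‖z‖ ^ 2) (by simp))
  have i1 : Integrable fun xh => ‖slice (fun x => fderiv ℝ b x (bv 1)) s xh‖ ^ 2 :=
    Continuous.integrable_of_hasCompactSupport (by have := c1.1.continuous; fun_prop)
      (c1.2.comp_left (g := fun z : ℂ => ‖z‖ ^ 2) (by simp))
  have e : gI b s = ∫ xh, (‖slice (fun x => fderiv ℝ b x (bv 0)) s xh‖ ^ 2 + ‖slice (fun x => fderiv ℝ b x (bv 1)) s xh‖ ^ 2) := rfl
  have i2 : Integrable fun xh => (‖slice (fun x => fderiv ℝ b x (bv 0)) s xh‖ ^ 2 + ‖slice (fun x => fderiv ℝ b x (bv 1)) s xh‖ ^ 2) :=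
    i0.add i1
  rw [e, ofReal_integral_eq_lintegral_ofReal i2 (Filter.Eventually.of_forall fun _ => by positivity),
    ← lintegral_add_left (meas_enorm_sq c0.1.continuous)]
  congr 1; ext xh
  rw [ENNReal.ofReal_add (by positivity) (by positivity), ENNReal.ofReal_pow (norm_nonneg _),
    ENNReal.ofReal_pow (norm_nonneg _), ofReal_norm, ofReal_norm]

lemma bdd_gI {b : E 3 → ℂ} (hb : CC b) : BddAbove (range fun s => gI b s ^ (1/2:ℝ)) := by
  obtain ⟨K0, h0, k0⟩ := slice_l2 (hb.d3 (bv 0))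
  obtain ⟨K1, h1, k1⟩ := slice_l2 (hb.d3 (bv 1))
  refine ⟨(K0 + K1).toReal ^ (1/2:ℝ), ?_⟩
  rintro _ ⟨s, rfl⟩
  dsimp only
  refine Real.rpow_le_rpow (gI_nonneg b s) ?_ (by norm_num)
  rw [← ENNReal.ofReal_le_iff_le_toReal (by finiteness), gI_eq hb]
  exact add_le_add (k0 s) (k1 s)

lemma half_sq {x : ℝ} (hx : 0 ≤ x) : (x ^ (1/2:ℝ)) ^ 2 = x := by
  rw [← Real.sqrt_eq_rpow, Real.sq_sqrt hx]

lemma final {a b : E 3 → ℂ} (ha : CC a) (hb : CC b) :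
    hNorm 3 (1/2) (fun x => a x * b x) ≤ (Real.sqrt Mc.toReal + 1) * hNorm 3 (1/2) a *
      ((⨆ s, gI b s ^ (1/2:ℝ)) + (⨆ x, ‖b x‖) +
        (∫ s, hNorm 2 (1/2) (slice (fun x => fderiv ℝ b x (bv 2)) s) ^ 2) ^ (1/2:ℝ)) := by
  set S := ⨆ s, gI b s ^ (1/2:ℝ) with hS
  set B := ⨆ x, ‖b x‖ with hB
  set I := ∫ s, hNorm 2 (1/2) (slice (fun x => fderiv ℝ b x (bv 2)) s) ^ 2 with hI
  have hI0 : 0 ≤ I := integral_nonneg fun _ => by positivity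
  have hB0 : 0 ≤ B := Real.iSup_nonneg fun _ => norm_nonneg _
  have hS0 : 0 ≤ S := Real.iSup_nonneg fun s => Real.rpow_nonneg (gI_nonneg b s) _
  have hbB : ∀ x, ‖b x‖ₑ ≤ ENNReal.ofReal B := by
    intro x
    rw [← ofReal_norm]
    exact ENNReal.ofReal_le_ofReal (le_ciSup (bdd_b hb) x)
  have hg : ∀ s, gI b s ≤ S ^ 2 := by
    intro s
    rw [← half_sq (gI_nonneg b s)]
    exact pow_le_pow_left₀ (Real.rpow_nonneg (gI_nonneg b s) _) (le_ciSup (bdd_gI hb) s) 2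
  have hN : ∀ j : Fin 2, ∀ s, ∫⁻ xh, ‖fderiv ℝ b (emb xh s) (bv j.castSucc)‖ₑ ^ 2 ≤ ENNReal.ofReal (S ^ 2) := by
    intro j s
    refine le_trans ?_ (ENNReal.ofReal_le_ofReal (hg s))
    rw [gI_eq hb]
    fin_cases j
    · exact le_self_add
    · exact le_add_self
  have hm := main ha hb hbB ENNReal.ofReal_ne_top hN ENNReal.ofReal_ne_top
  rw [T_eq (hb.d3 (bv 2)), ← hI, ← ENNReal.ofReal_pow hB0, ← ENNReal.ofReal_add (by positivity) (by positivity),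
    ← ENNReal.ofReal_add (by positivity) hI0] at hm
  have ht := ENNReal.toReal_mono (by have := Mc_ne_top; have := HS_ne_top ha; finiteness) hm
  rw [ENNReal.toReal_mul, ENNReal.toReal_mul, ENNReal.toReal_ofReal (by positivity), ← hNorm_sq ha, ← hNorm_sq (ha.mul hb)] at ht
  have hM0 : 0 ≤ Mc.toReal := ENNReal.toReal_nonneg
  have ha0 := hNorm_nonneg ha
  set T := I ^ (1/2:ℝ) with hT
  have hT0 : 0 ≤ T := Real.rpow_nonneg hI0 _
  have hT2 : T ^ 2 = I := half_sq hI0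
  refine le_of_sq_le_sq (ht.trans ?_) (by positivity)
  rw [mul_pow, mul_pow]
  have h1 : Mc.toReal ≤ (Real.sqrt Mc.toReal + 1) ^ 2 := by
    nlinarith [Real.sq_sqrt hM0, Real.sqrt_nonneg Mc.toReal]
  have h2 : B ^ 2 + S ^ 2 + I ≤ (S + B + T) ^ 2 := by
    rw [← hT2]
    nlinarith [mul_nonneg hS0 hB0, mul_nonneg hS0 hT0, mul_nonneg hB0 hT0]
  calc _ ≤ (Real.sqrt Mc.toReal + 1) ^ 2 * (S + B + T) ^ 2 * hNorm 3 (1/2) a ^ 2 := by gcongr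
    _ = _ := by ring

end PA
end PAaux

/-- `‖ab‖_{Ḣ^{1/2}(ℝ³)} ≤ C ‖a‖_{Ḣ^{1/2}} (‖∇_h b‖_{L^∞_v L²_h} + ‖b‖_{L^∞}
+ ‖∂₃ b‖_{L²_v Ḣ^{1/2}_h})` for smooth compactly supported `a, b`. -/
theorem product_aniso_half :
    ∃ C > (0:ℝ), ∀ a b : E 3 → ℂ,
      ContDiff ℝ (⊤ : ℕ∞) a → HasCompactSupport a → ContDiff ℝ (⊤ : ℕ∞) b → HasCompactSupport b →
      hNorm 3 (1/2) (fun x => a x * b x) ≤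
        C * hNorm 3 (1/2) a *
          ((⨆ x₃ : ℝ, (∫ xh : E 2,
              (‖fderiv ℝ b (emb xh x₃) (EuclideanSpace.single 0 1)‖ ^ 2
               + ‖fderiv ℝ b (emb xh x₃) (EuclideanSpace.single 1 1)‖ ^ 2)) ^ (1/2 : ℝ))
            + (⨆ x : E 3, ‖b x‖)
            + (∫ x₃ : ℝ,
                (hNorm 2 (1/2) (fun xh : E 2 =>
                  fderiv ℝ b (emb xh x₃) (EuclideanSpace.single 2 1))) ^ 2) ^ (1/2 : ℝ)) := by
  refine ⟨Real.sqrt PA.Mc.toReal + 1, by positivity, fun a b ha ha' hb hb' => ?_⟩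
  exact PA.final ⟨ha, ha'⟩ ⟨hb, hb'⟩
end
end
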